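/- arXiv:1504.05405 — 2 statements merged into one kernel-verified Lean document; each statement's English description precedes it below -/
import Mathlib

section
/- Let φ : ℕ → ℕ₀ be a function with φ(d) ≤ d for all d ∈ ℕ, and suppose that for some α ∈ [0,1) one has φ(d) ∈ o(d^{1−α}) as d → ∞ (i.e. φ(d)/d^{1−α} → 0). Then liminf_{d→∞} d · q_L(α,d,φ(d)) ≥ 1/8. -/
open MeasureTheory Filter ENNReal

/-- Sites of `ℤ^{d+1}`. -/
abbrev Site (d : ℕ) := Fin (d + 1) → ℤ

/-- Site-percolation configurations on `ℤ^{d+1}`: a site is open iff its value is `true`. -/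
abbrev Config (d : ℕ) := Site d → Bool

/-- `P` is the i.i.d. Bernoulli(`p`) product measure on `{0,1}^ι`: it is a probability
measure whose cylinder events have the correct product probabilities. -/
def IsBernoulli {ι : Type*} (p : ℝ) (P : Measure (ι → Bool)) : Prop :=
  IsProbabilityMeasure P ∧
    ∀ (s : Finset ι) (f : ι → Bool),
      P {ω | ∀ x ∈ s, ω x = f x} =
        ∏ x ∈ s, (if f x then ENNReal.ofReal p else ENNReal.ofReal (1 - p))

/-- A function `F : ℤ^d → ℤ` is Lipschitz: `‖x − y‖₁ = 1 → |F x − F y| ≤ 1`. -/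
def IsLipschitzFn {d : ℕ} (F : (Fin d → ℤ) → ℤ) : Prop :=
  ∀ x y : Fin d → ℤ, (∑ i, |x i - y i|) = 1 → |F x - F y| ≤ 1

/-- Height `⌊α ∑ᵢ ηᵢ xᵢ⌋` of the tilted plane `L^{α,d}_η` above `x ∈ ℤ^d`. -/
noncomputable def planeHt (α : ℝ) {d : ℕ} (η x : Fin d → ℤ) : ℤ :=
  ⌊α * ∑ i, (η i : ℝ) * (x i : ℝ)⌋

/-- `η ∈ {-1,0,1}^d`. -/
def IsSign {d : ℕ} (η : Fin d → ℤ) : Prop := ∀ i, η i = -1 ∨ η i = 0 ∨ η i = 1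

/-- The event `LIP^{α,d}_η` that there is an open Lipschitz surface lying (strictly) above
the tilted plane `L^{α,d}_η`. -/
def LIP (α : ℝ) {d : ℕ} (η : Fin d → ℤ) : Set (Config d) :=
  {ω | ∃ F : (Fin d → ℤ) → ℤ, IsLipschitzFn F ∧
    ∀ x : Fin d → ℤ, ω (Fin.snoc x (F x)) = true ∧ planeHt α η x < F x}

/-- `pc` is the critical probability `p_L(α,d,η)` of Lipschitz percolation above the tilted
plane `L^{α,d}_η`: `pc ∈ (0,1)`, for `p` below it there is `P_p`-a.s. no open Lipschitz
surface above the plane, and for `p` above it there `P_p`-a.s. is one.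
(Here `P p` is the Bernoulli(`p`) product measure on `{0,1}^{ℤ^{d+1}}`.) -/
def IsCriticalProb {d : ℕ} (P : ℝ → Measure (Config d)) (α : ℝ) (η : Fin d → ℤ)
    (pc : ℝ) : Prop :=
  pc ∈ Set.Ioo (0 : ℝ) 1 ∧
    (∀ p, 0 ≤ p → p < pc → P p (LIP α η) = 0) ∧
    (∀ p, pc < p → p ≤ 1 → P p (LIP α η) = 1)

/-- The canonical direction vector `η ∈ {-1,0,1}^d` with `k` entries equal to `1`; the
critical probability `p_L(α,d,η)` depends on `η` only through `k = ‖η‖₁`, and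
`p_L(α,d,k)` denotes the common value. -/
def etaK (d k : ℕ) : Fin d → ℤ := fun i => if (i : ℕ) < k then 1 else 0

/-- The site obtained from `z` by a backward step of an admissible path: `none` crosses a closed
site downwards, `some (i, b)` is a diagonal step upwards in direction `±i`. -/
def backStep {d : ℕ} (z : (Fin d → ℤ) × ℤ) : Option (Fin d × Bool) → (Fin d → ℤ) × ℤ
  | none => (z.1, z.2 - 1)
  | some (i, b) => (z.1 + Pi.single i (if b then 1 else -1), z.2 + 1)

/-- The backward path with steps `l` from `z` is admissible for `ω` and ends on the plane. -/
def Admissible {d : ℕ} (α : ℝ) (η : Fin d → ℤ) (ω : Config d) :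
    (Fin d → ℤ) × ℤ → List (Option (Fin d × Bool)) → Prop
  | z, [] => z.2 = planeHt α η z.1
  | z, s :: l => (s = none → ω (Fin.snoc z.1 z.2) = false) ∧ Admissible α η ω (backStep z s) l

/-- The sites crossed downwards by the backward path with steps `l` from `z`. -/
def crossed {d : ℕ} : (Fin d → ℤ) × ℤ → List (Option (Fin d × Bool)) → List ((Fin d → ℤ) × ℤ)
  | _, [] => []
  | z, none :: l => z :: crossed (backStep z none) l
  | z, some a :: l => crossed (backStep z (some a)) l

theorem Admissible.closed_of_mem_crossed {d : ℕ} {α : ℝ} {η : Fin d → ℤ} {ω : Config d}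
    {z y : (Fin d → ℤ) × ℤ} {l : List (Option (Fin d × Bool))} (h : Admissible α η ω z l)
    (hy : y ∈ crossed z l) : ω (Fin.snoc y.1 y.2) = false := by
  induction l generalizing z with
  | nil => simp [crossed] at hy
  | cons s l ih =>
    cases s with
    | none =>
      rcases List.mem_cons.1 hy with rfl | hy
      · exact h.1 rfl
      · exact ih h.2 hy
    | some a => exact ih h.2 hy

theorem Admissible.exists_of_mem_crossed {d : ℕ} {α : ℝ} {η : Fin d → ℤ} {ω : Config d}
    {z y : (Fin d → ℤ) × ℤ} {l : List (Option (Fin d × Bool))} (h : Admissible α η ω z l)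
    (hy : y ∈ crossed z l) : ∃ l', Admissible α η ω y l' ∧ l'.length ≤ l.length := by
  induction l generalizing z with
  | nil => simp [crossed] at hy
  | cons s l ih =>
    have key : y ∈ crossed (backStep z s) l →
        ∃ l', Admissible α η ω y l' ∧ l'.length ≤ (s :: l).length := fun hy => by
      obtain ⟨l', h1, h2⟩ := ih h.2 hy
      exact ⟨l', h1, h2.trans (by simp)⟩
    cases s with
    | none =>
      rcases List.mem_cons.1 hy with rfl | hy
      · exact ⟨_, h, le_rfl⟩
      · exact key hy
    | some a => exact key hy

/-- A shortest admissible path crosses no site twice. -/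
theorem Admissible.nodup_crossed {d : ℕ} {α : ℝ} {η : Fin d → ℤ} {ω : Config d}
    {z : (Fin d → ℤ) × ℤ} {l : List (Option (Fin d × Bool))} (h : Admissible α η ω z l)
    (hmin : ∀ l', Admissible α η ω z l' → l.length ≤ l'.length) : (crossed z l).Nodup := by
  induction l generalizing z with
  | nil => simp [crossed]
  | cons s l ih =>
    have htail : (crossed (backStep z s) l).Nodup := ih h.2 fun l' hl' => by
      simpa using hmin (s :: l') ⟨h.1, hl'⟩
    cases s with
    | none =>
      refine List.nodup_cons.2 ⟨fun hz => ?_, htail⟩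
      obtain ⟨l', h1, h2⟩ := h.2.exists_of_mem_crossed hz
      have := hmin l' h1
      simp at this
      omega
    | some a => exact htail

theorem Admissible.exists_nodup {d : ℕ} {α : ℝ} {η : Fin d → ℤ} {ω : Config d}
    {z : (Fin d → ℤ) × ℤ} (h : ∃ l, Admissible α η ω z l) :
    ∃ l, Admissible α η ω z l ∧ (crossed z l).Nodup := by
  classical
  have hex : ∃ n, ∃ l, Admissible α η ω z l ∧ l.length = n :=
    let ⟨l, hl⟩ := h; ⟨_, l, hl, rfl⟩
  obtain ⟨l, hl, hn⟩ := Nat.find_spec hex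
  exact ⟨l, hl, hl.nodup_crossed fun l' hl' => hn ▸ Nat.find_min' hex ⟨l', hl', rfl⟩⟩

/-- The weight of a backward step in the exponentially tilted path count. -/
noncomputable def stepWeight {d : ℕ} (α q θ : ℝ) (η : Fin d → ℤ) : Option (Fin d × Bool) → ℝ
  | none => q * θ
  | some (i, b) => θ ^ (-1 + α * (η i * (if b then 1 else -1)) : ℝ)

theorem stepWeight_nonneg {d : ℕ} {α q θ : ℝ} (hq : 0 ≤ q) (hθ : 1 ≤ θ) (η : Fin d → ℤ)
    (s : Option (Fin d × Bool)) : 0 ≤ stepWeight α q θ η s := by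
  rcases s with _ | ⟨i, b⟩ <;> simp only [stepWeight] <;> positivity

theorem Admissible.pow_le_prod_stepWeight {d : ℕ} {α q θ : ℝ} (hq : 0 ≤ q) (hθ : 1 ≤ θ)
    {η : Fin d → ℤ} {ω : Config d} {z : (Fin d → ℤ) × ℤ} {l : List (Option (Fin d × Bool))}
    (h : Admissible α η ω z l) :
    q ^ (crossed z l).length ≤
      θ ^ (-(z.2 - α * ∑ i, (η i : ℝ) * (z.1 i : ℝ)) : ℝ) * (l.map (stepWeight α q θ η)).prod := by
  have hθ0 : 0 < θ := by linarith
  induction l generalizing z with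
  | nil =>
    have h' : z.2 = ⌊α * ∑ i, (η i : ℝ) * (z.1 i : ℝ)⌋ := h
    have := Int.floor_le (α * ∑ i, (η i : ℝ) * (z.1 i : ℝ))
    rw [← h'] at this
    simpa [crossed] using Real.one_le_rpow hθ (by linarith)
  | cons s l ih =>
    have := ih h.2
    rcases s with _ | ⟨i, b⟩
    · simp only [crossed, List.length_cons, List.map_cons, List.prod_cons, stepWeight, pow_succ']
      refine (mul_le_mul_of_nonneg_left this hq).trans_eq ?_
      have e : (-(((backStep z none).2 : ℤ) - α * ∑ i, (η i : ℝ) * ((backStep z none).1 i : ℝ)) : ℝ)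
          = -(z.2 - α * ∑ i, (η i : ℝ) * (z.1 i : ℝ)) + 1 := by
        simp only [backStep]; push_cast; ring
      rw [e, Real.rpow_add hθ0, Real.rpow_one]
      ring
    · simp only [crossed, List.map_cons, List.prod_cons, stepWeight]
      refine this.trans_eq ?_
      have hs : ∑ j, (η j : ℝ) * ((backStep z (some (i, b))).1 j : ℝ)
          = ∑ j, (η j : ℝ) * (z.1 j : ℝ) + η i * (if b then 1 else -1) := by
        have : ∀ j, (η j : ℝ) * ((backStep z (some (i, b))).1 j : ℝ)
            = (η j : ℝ) * (z.1 j : ℝ) + if j = i then (η i : ℝ) * (if b then 1 else -1) else 0 := by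
          intro j
          by_cases hj : j = i
          · subst hj
            cases b <;> simp [backStep] <;> ring
          · simp [backStep, hj]
        simp only [this, Finset.sum_add_distrib, Finset.sum_ite_eq', Finset.mem_univ, if_true]
      have e : (-(((backStep z (some (i, b))).2 : ℤ)
            - α * ∑ j, (η j : ℝ) * ((backStep z (some (i, b))).1 j : ℝ)) : ℝ)
          = -(z.2 - α * ∑ i, (η i : ℝ) * (z.1 i : ℝ))
            + (-1 + α * (η i * (if b then 1 else -1))) := by
        rw [hs]; simp only [backStep]; push_cast; ring
      rw [e, Real.rpow_add hθ0]
      ring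

theorem snoc_pair_injective (d : ℕ) :
    Function.Injective fun z : (Fin d → ℤ) × ℤ => (Fin.snoc z.1 z.2 : Site d) := by
  rintro ⟨x, g⟩ ⟨y, h⟩ hxy
  obtain ⟨h1, h2⟩ := Fin.snoc_injective2 hxy
  exact Prod.ext h1 h2

theorem IsBernoulli.measure_closed {ι κ : Type*} [DecidableEq κ] {p : ℝ} {P : Measure (ι → Bool)}
    (hP : IsBernoulli p P) {σ : κ → ι} (hσ : Function.Injective σ) (s : Finset κ) :
    P {ω | ∀ x ∈ s, ω (σ x) = false} = ENNReal.ofReal (1 - p) ^ s.card := by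
  have := hP.2 (s.map ⟨σ, hσ⟩) fun _ => false
  simpa using this

/-- Union bound over the admissible paths that reach height `g` above the origin. -/
theorem measure_reach_le {d : ℕ} {α q θ : ℝ} (hq : 0 ≤ q) (hθ : 1 ≤ θ) {η : Fin d → ℤ}
    {P : Measure (Config d)} (hP : IsBernoulli (1 - q) P) (g : ℕ) :
    P {ω | ∃ l, Admissible α η ω (0, (g : ℤ)) l} ≤
      ENNReal.ofReal θ⁻¹ ^ g * ∑' L : ℕ, ENNReal.ofReal (∑ s, stepWeight α q θ η s) ^ L := by
  classical
  have hθ0 : 0 < θ := by linarith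
  have hsub : {ω : Config d | ∃ l, Admissible α η ω (0, (g : ℤ)) l} ⊆
      ⋃ L : ℕ, ⋃ w : Fin L → Option (Fin d × Bool),
        {ω | Admissible α η ω (0, (g : ℤ)) (List.ofFn w) ∧
          (crossed (0, (g : ℤ)) (List.ofFn w)).Nodup} := by
    intro ω hω
    obtain ⟨l, h1, h2⟩ := Admissible.exists_nodup hω
    refine Set.mem_iUnion.2 ⟨l.length, Set.mem_iUnion.2 ⟨l.get, ?_⟩⟩
    simp only [Set.mem_ofPred_eq, List.ofFn_get]
    exact ⟨h1, h2⟩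
  have hw : ∀ (L : ℕ) (w : Fin L → Option (Fin d × Bool)),
      P {ω | Admissible α η ω (0, (g : ℤ)) (List.ofFn w) ∧
          (crossed (0, (g : ℤ)) (List.ofFn w)).Nodup} ≤
        ENNReal.ofReal (θ⁻¹ ^ g * ∏ i, stepWeight α q θ η (w i)) := by
    intro L w
    set l := List.ofFn w with hl
    rcases Set.eq_empty_or_nonempty {ω | Admissible α η ω (0, (g : ℤ)) l ∧
          (crossed (0, (g : ℤ)) l).Nodup} with he | ⟨ω₀, h1, h2⟩
    · rw [he]; simp
    calc P {ω | Admissible α η ω (0, (g : ℤ)) l ∧ (crossed (0, (g : ℤ)) l).Nodup}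
        ≤ P {ω | ∀ y ∈ (crossed (0, (g : ℤ)) l).toFinset, ω (Fin.snoc y.1 y.2) = false} :=
          measure_mono fun ω hω y hy => hω.1.closed_of_mem_crossed (List.mem_toFinset.1 hy)
      _ = ENNReal.ofReal q ^ (crossed (0, (g : ℤ)) l).length := by
          rw [hP.measure_closed (snoc_pair_injective d), List.toFinset_card_of_nodup h2,
            _root_.sub_sub_cancel]
      _ = ENNReal.ofReal (q ^ (crossed (0, (g : ℤ)) l).length) := (ENNReal.ofReal_pow hq _).symm
      _ ≤ _ := by
          refine ENNReal.ofReal_le_ofReal ((h1.pow_le_prod_stepWeight hq hθ).trans_eq ?_)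
          rw [hl, List.map_ofFn, List.prod_ofFn]
          simp [Real.rpow_neg hθ0.le]
  refine (measure_mono hsub).trans ((measure_iUnion_le _).trans ?_)
  rw [← ENNReal.tsum_mul_left]
  refine ENNReal.tsum_le_tsum fun L => (measure_iUnion_fintype_le _ _).trans ?_
  refine (Finset.sum_le_sum fun w _ => hw L w).trans_eq ?_
  have hnn := stepWeight_nonneg (α := α) hq hθ η
  rw [← ENNReal.ofReal_sum_of_nonneg fun w _ =>
      mul_nonneg (by positivity) (Finset.prod_nonneg fun i _ => hnn _),
    ← Finset.mul_sum, ENNReal.ofReal_mul (by positivity), ENNReal.ofReal_pow (by positivity),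
    ← Fintype.sum_pow, ENNReal.ofReal_pow (Finset.sum_nonneg fun s _ => hnn s)]

theorem Admissible.cons_some {d : ℕ} {α : ℝ} {η : Fin d → ℤ} {ω : Config d} {x y : Fin d → ℤ}
    (hxy : ∑ i, |x i - y i| = 1) {g : ℤ} {l : List (Option (Fin d × Bool))}
    (h : Admissible α η ω (x, g) l) : ∃ l', Admissible α η ω (y, g - 1) l' := by
  obtain ⟨i, -, hi⟩ : ∃ i ∈ Finset.univ, |x i - y i| ≠ 0 :=
    Finset.exists_ne_zero_of_sum_ne_zero (by omega)
  have hrest := Finset.add_sum_erase Finset.univ (fun i => |x i - y i|) (Finset.mem_univ i)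
  have hpos : 0 ≤ ∑ j ∈ Finset.univ.erase i, |x j - y j| := Finset.sum_nonneg fun _ _ => abs_nonneg _
  have hi1 : |x i - y i| = 1 := by
    have := abs_nonneg (x i - y i)
    simp only [hxy] at hrest
    omega
  have hz : ∑ j ∈ Finset.univ.erase i, |x j - y j| = 0 := by
    simp only [hxy] at hrest
    omega
  have hj : ∀ j, j ≠ i → x j = y j := fun j hj => by
    have := (Finset.sum_eq_zero_iff_of_nonneg fun _ _ => abs_nonneg _).1 hz j
      (Finset.mem_erase.2 ⟨hj, Finset.mem_univ j⟩)
    have := abs_eq_zero.1 this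
    omega
  refine ⟨some (i, decide (x i - y i = 1)) :: l, by simp, ?_⟩
  convert h using 1
  refine Prod.ext ?_ (by simp [backStep])
  funext j
  by_cases h' : j = i
  · subst h'
    rcases (abs_eq zero_le_one).1 hi1 with h1 | h1
    · simp [backStep, h1]; omega
    · simp [backStep, h1]; omega
  · simp [backStep, h', hj j h']

theorem Admissible.bddAbove {d : ℕ} {α : ℝ} {η : Fin d → ℤ} {ω : Config d}
    (h0 : BddAbove {g : ℤ | ∃ l, Admissible α η ω (0, g) l}) (x : Fin d → ℤ) :
    BddAbove {g : ℤ | ∃ l, Admissible α η ω (x, g) l} := by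
  obtain ⟨n, hn⟩ : ∃ n : ℕ, ∑ i, |x i| = n :=
    ⟨_, (Int.toNat_of_nonneg (Finset.sum_nonneg fun _ _ => abs_nonneg _)).symm⟩
  induction n generalizing x with
  | zero =>
    have : x = 0 := by
      funext i
      exact abs_eq_zero.1 ((Finset.sum_eq_zero_iff_of_nonneg fun _ _ => abs_nonneg _).1
        (by simpa using hn) i (Finset.mem_univ i))
    rwa [this]
  | succ n ih =>
    obtain ⟨i, -, hi⟩ : ∃ i ∈ Finset.univ, |x i| ≠ 0 :=
      Finset.exists_ne_zero_of_sum_ne_zero (by push_cast at hn; omega)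
    have hxi : x i ≠ 0 := by simpa using hi
    set y : Fin d → ℤ := Function.update x i (x i - (x i).sign) with hy
    have hyj : ∀ j, j ≠ i → y j = x j := fun j hj => Function.update_of_ne hj _ _
    have hyi : y i = x i - (x i).sign := Function.update_self ..
    have hsx := Finset.add_sum_erase Finset.univ (fun i => |x i|) (Finset.mem_univ i)
    have hsy := Finset.add_sum_erase Finset.univ (fun i => |y i|) (Finset.mem_univ i)
    have hsxy := Finset.add_sum_erase Finset.univ (fun i => |x i - y i|) (Finset.mem_univ i)
    have e1 : ∑ j ∈ Finset.univ.erase i, |y j| = ∑ j ∈ Finset.univ.erase i, |x j| :=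
      Finset.sum_congr rfl fun j hj => by rw [hyj j (Finset.ne_of_mem_erase hj)]
    have e2 : ∑ j ∈ Finset.univ.erase i, |x j - y j| = 0 :=
      Finset.sum_eq_zero fun j hj => by rw [hyj j (Finset.ne_of_mem_erase hj)]; simp
    have habs : |y i| = |x i| - 1 ∧ |x i - y i| = 1 := by
      rw [hyi]
      rcases lt_or_gt_of_ne hxi with h | h
      · rw [Int.sign_eq_neg_one_of_neg h, abs_of_neg h]
        constructor
        · rw [abs_of_nonpos (by omega)]; omega
        · norm_num
      · rw [Int.sign_eq_one_of_pos h, abs_of_pos h]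
        constructor
        · rw [abs_of_nonneg (by omega)]
        · norm_num
    obtain ⟨B, hB⟩ := ih y (by push_cast at hn; omega)
    refine ⟨B + 1, fun g ⟨l, hl⟩ => ?_⟩
    have := hB (Admissible.cons_some (y := y) (by omega) hl)
    omega

/-- If the admissible paths reach only boundedly high above the origin, their upper envelope is
an open Lipschitz surface. -/
theorem mem_LIP_of_bddAbove {d : ℕ} {α : ℝ} {η : Fin d → ℤ} {ω : Config d}
    (h0 : BddAbove {g : ℤ | ∃ l, Admissible α η ω (0, g) l}) : ω ∈ LIP α η := by
  have hb := Admissible.bddAbove h0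
  have hbase : ∀ x, planeHt α η x ∈ {g : ℤ | ∃ l, Admissible α η ω (x, g) l} :=
    fun x => ⟨[], rfl⟩
  have hmem : ∀ x, sSup {g : ℤ | ∃ l, Admissible α η ω (x, g) l} ∈
      {g : ℤ | ∃ l, Admissible α η ω (x, g) l} := fun x => Int.csSup_mem ⟨_, hbase x⟩ (hb x)
  have hle : ∀ x y, (∑ i, |x i - y i|) = 1 →
      sSup {g : ℤ | ∃ l, Admissible α η ω (x, g) l} - 1 ≤
        sSup {g : ℤ | ∃ l, Admissible α η ω (y, g) l} := fun x y hxy => by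
    obtain ⟨l, hl⟩ := hmem x
    exact le_csSup (hb y) (Admissible.cons_some hxy hl)
  refine ⟨fun x => sSup {g : ℤ | ∃ l, Admissible α η ω (x, g) l} + 1, fun x y hxy => ?_,
    fun x => ⟨?_, ?_⟩⟩
  · have h1 := hle x y hxy
    have h2 := hle y x (by simpa only [abs_sub_comm] using hxy)
    rw [abs_le]
    constructor <;> dsimp only <;> omega
  · by_contra hc
    obtain ⟨l, hl⟩ := hmem x
    have : sSup {g : ℤ | ∃ l, Admissible α η ω (x, g) l} + 1 ≤
        sSup {g : ℤ | ∃ l, Admissible α η ω (x, g) l} :=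
      le_csSup (hb x) ⟨none :: l, fun _ => by simpa using hc, by simpa [backStep] using hl⟩
    omega
  · have := le_csSup (hb x) (hbase x)
    dsimp only
    omega

theorem measure_LIP_ne_zero {d : ℕ} {α q θ : ℝ} (hq : 0 ≤ q) (hθ : 1 < θ) {η : Fin d → ℤ}
    {P : Measure (Config d)} (hP : IsBernoulli (1 - q) P)
    (hw : ∑ s, stepWeight α q θ η s < 1) : P (LIP α η) ≠ 0 := by
  have hfin : ∑' g : ℕ, P {ω | ∃ l, Admissible α η ω (0, (g : ℤ)) l} ≠ ⊤ := by
    refine ne_top_of_le_ne_top ?_ (ENNReal.tsum_le_tsum fun g => measure_reach_le hq hθ.le hP g)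
    rw [ENNReal.tsum_mul_right, ENNReal.tsum_geometric, ENNReal.tsum_geometric]
    have hinv : ∀ r : ℝ, r < 1 → (1 - ENNReal.ofReal r)⁻¹ ≠ ⊤ := fun r hr =>
      ENNReal.inv_ne_top.2 (tsub_pos_of_lt (ENNReal.ofReal_lt_one.2 hr)).ne'
    exact ENNReal.mul_ne_top (hinv _ (inv_lt_one_of_one_lt₀ hθ)) (hinv _ hw)
  have hbc := measure_setOfPred_frequently_eq_zero hfin
  have := hP.1
  intro h0
  have huniv : (Set.univ : Set (Config d)) ⊆
      {ω | ∃ᶠ g : ℕ in atTop, ∃ l, Admissible α η ω (0, (g : ℤ)) l} ∪ LIP α η := by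
    intro ω _
    by_cases h : ∃ᶠ g : ℕ in atTop, ∃ l, Admissible α η ω (0, (g : ℤ)) l
    · exact Or.inl h
    · refine Or.inr (mem_LIP_of_bddAbove ?_)
      obtain ⟨B, hB⟩ := eventually_atTop.1 (not_frequently.1 h)
      refine ⟨B, fun g hg => ?_⟩
      by_contra! hlt
      lift g to ℕ using by omega
      exact hB g (by omega) hg
  have := (measure_mono huniv).trans (measure_union_le (μ := P) _ _)
  rw [hbc, h0] at this
  simp at this

theorem sum_word_succ {S : Type*} [Fintype S] (N : ℕ) (f : List S → ℝ) :
    ∑ w : Fin (N + 1) → S, f (List.ofFn w) =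
      ∑ s, ∑ w : Fin N → S, f (s :: List.ofFn w) := by
  rw [← (Fin.consEquiv fun _ => S).sum_comp, Fintype.sum_prod_type]
  simp [Fin.consEquiv, List.ofFn_succ]

section OrientedWalk

variable {S : Type*} [Fintype S] [DecidableEq S]

/-- The average of `f` over the translates of a point by `ε` times a uniform unit vector. -/
noncomputable def shiftAvg (ε : ℤ) (f : (S → ℤ) → ℝ) (x : S → ℤ) : ℝ :=
  (∑ s, f (x + Pi.single s ε)) / Fintype.card S

/-- The indicator function of the origin. -/
noncomputable def originInd (x : S → ℤ) : ℝ := if x = 0 then 1 else 0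

/-- The law at time `n` of the uniform oriented walk on `ℤ^S` started at the origin. -/
noncomputable def walkProb (n : ℕ) : (S → ℤ) → ℝ := (shiftAvg (-1))^[n] originInd

/-- The probability that two independent uniform oriented walks with initial difference `z`
meet at time `n`. -/
noncomputable def meetProb (n : ℕ) : (S → ℤ) → ℝ := (shiftAvg 1)^[n] (walkProb n)

theorem shiftAvg_commute : Function.Commute (shiftAvg (S := S) 1) (shiftAvg (S := S) (-1)) := by
  intro f
  funext x
  simp only [shiftAvg, ← Finset.sum_div]
  rw [Finset.sum_comm]
  simp only [add_right_comm]

theorem meetProb_succ (n : ℕ) :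
    meetProb (S := S) (n + 1) = shiftAvg 1 (shiftAvg (-1) (meetProb n)) := by
  have h : shiftAvg (-1) (meetProb (S := S) n) = (shiftAvg 1)^[n] (walkProb (n + 1)) := by
    rw [meetProb, walkProb, walkProb, Function.iterate_succ_apply']
    exact ((shiftAvg_commute (S := S)).iterate_left n _).symm
  rw [h, meetProb, Function.iterate_succ_apply']

theorem shiftAvg_mono (ε : ℤ) {f g : (S → ℤ) → ℝ} (h : ∀ x, f x ≤ g x) (x : S → ℤ) :
    shiftAvg ε f x ≤ shiftAvg ε g x :=
  div_le_div_of_nonneg_right (Finset.sum_le_sum fun _ _ => h _) (Nat.cast_nonneg _)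

theorem shiftAvg_const [Nonempty S] (ε : ℤ) (c : ℝ) :
    shiftAvg (S := S) ε (fun _ => c) = fun _ => c := by
  funext x
  simp [shiftAvg]

theorem walkProb_succ (n : ℕ) : walkProb (S := S) (n + 1) = shiftAvg (-1) (walkProb n) :=
  Function.iterate_succ_apply' _ _ _

theorem walkProb_nonneg (n : ℕ) (x : S → ℤ) : 0 ≤ walkProb n x := by
  induction n generalizing x with
  | zero => simp only [walkProb, Function.iterate_zero, id, originInd]; split_ifs <;> norm_num
  | succ n ih =>
    rw [walkProb_succ]
    exact div_nonneg (Finset.sum_nonneg fun _ _ => ih _) (Nat.cast_nonneg _)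

theorem sum_add_single (x : S → ℤ) (s : S) (ε : ℤ) :
    ∑ r, (x + Pi.single s ε : S → ℤ) r = ∑ r, x r + ε := by
  simp [Finset.sum_add_distrib]

theorem walkProb_eq_zero (n : ℕ) (x : S → ℤ) (h : ∑ s, x s ≠ n) : walkProb n x = 0 := by
  induction n generalizing x with
  | zero =>
    have : x ≠ 0 := by rintro rfl; simp at h
    simp [walkProb, originInd, this]
  | succ n ih =>
    rw [walkProb_succ, shiftAvg, Finset.sum_eq_zero fun s _ => ih _ ?_, zero_div]
    rw [sum_add_single]
    push_cast at h
    omega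

/-- Size-biasing identity for the multinomial distribution. -/
theorem coord_mul_walkProb (n : ℕ) (x : S → ℤ) (s : S) :
    (x s : ℝ) * walkProb n x =
      n / Fintype.card S * walkProb (n - 1) (x + Pi.single s (-1)) := by
  induction n generalizing x with
  | zero =>
    by_cases h : x = 0 <;> simp [walkProb, originInd, h]
  | succ n ih =>
    have hr : ∀ r, (x s : ℝ) * walkProb n (x + Pi.single r (-1)) =
        n / Fintype.card S * walkProb (n - 1) (x + Pi.single s (-1) + Pi.single r (-1)) +
          if r = s then walkProb n (x + Pi.single s (-1)) else 0 := by
      intro r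
      have := ih (x + Pi.single r (-1))
      rw [add_right_comm, ← this]
      by_cases hrs : r = s
      · subst hrs; simp; ring
      · simp [hrs]
    have hn : (n : ℝ) / Fintype.card S *
        ∑ r, walkProb (n - 1) (x + Pi.single s (-1) + Pi.single r (-1)) =
        n * walkProb n (x + Pi.single s (-1)) := by
      cases n with
      | zero => simp
      | succ n => rw [walkProb_succ n]; simp only [shiftAvg, Nat.add_sub_cancel]; ring
    rw [walkProb_succ, shiftAvg, ← mul_div_assoc, Finset.mul_sum, Finset.sum_congr rfl fun r _ => hr r,
      Finset.sum_add_distrib, ← Finset.mul_sum, hn]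
    simp
    ring

/-- An upper bound for the largest multinomial probability with `n` trials and `D` equally
likely outcomes. -/
noncomputable def modeBound (D n : ℕ) : ℝ :=
  ∏ j ∈ Finset.range n, ((j : ℝ) + 1) / (D * ((j / D : ℕ) + 1))

theorem modeBound_succ (D n : ℕ) :
    modeBound D (n + 1) = modeBound D n * (((n : ℝ) + 1) / (D * ((n / D : ℕ) + 1))) :=
  Finset.prod_range_succ _ _

theorem modeBound_nonneg (D n : ℕ) : 0 ≤ modeBound D n :=
  Finset.prod_nonneg fun _ _ => by positivity

theorem walkProb_le_modeBound [Nonempty S] (n : ℕ) (x : S → ℤ) :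
    walkProb n x ≤ modeBound (Fintype.card S) n := by
  have hD : 0 < Fintype.card S := Fintype.card_pos
  induction n generalizing x with
  | zero =>
    simp only [walkProb, Function.iterate_zero, id, originInd, modeBound, Finset.prod_range_zero]
    split_ifs <;> norm_num
  | succ n ih =>
    by_cases hx : ∑ s, x s = (n + 1 : ℕ)
    swap
    · rw [walkProb_eq_zero _ _ hx]; exact modeBound_nonneg _ _
    obtain ⟨s, hs⟩ : ∃ s, ((n / Fintype.card S : ℕ) : ℤ) + 1 ≤ x s := by
      by_contra! hlt
      have h1 : ∑ s, x s ≤ ∑ _s : S, ((n / Fintype.card S : ℕ) : ℤ) :=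
        Finset.sum_le_sum fun s _ => by have := hlt s; omega
      have h2 : Fintype.card S * (n / Fintype.card S) ≤ n := Nat.mul_div_le _ _
      rw [hx, Finset.sum_const, Finset.card_univ, nsmul_eq_mul] at h1
      have h3 : n + 1 ≤ Fintype.card S * (n / Fintype.card S) := by exact_mod_cast h1
      omega
    have hs' : ((n / Fintype.card S : ℕ) : ℝ) + 1 ≤ x s := by
      have := (Int.cast_le (R := ℝ)).2 hs
      rwa [Int.cast_add, Int.cast_natCast, Int.cast_one] at this
    have key := coord_mul_walkProb (n + 1) x s
    have hpos : (0 : ℝ) < ((n / Fintype.card S : ℕ) : ℝ) + 1 := by positivity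
    have hD' : (0 : ℝ) < Fintype.card S := by exact_mod_cast hD
    have h1 : (((n / Fintype.card S : ℕ) : ℝ) + 1) * walkProb (n + 1) x ≤
        ((n : ℝ) + 1) / Fintype.card S * modeBound (Fintype.card S) n := by
      refine (mul_le_mul_of_nonneg_right hs' (walkProb_nonneg _ _)).trans ?_
      rw [key]
      push_cast
      exact mul_le_mul_of_nonneg_left (ih _) (by positivity)
    rw [modeBound_succ]
    rw [mul_comm, ← le_div_iff₀ hpos] at h1
    refine h1.trans_eq ?_
    field_simp

theorem meetProb_le_modeBound [Nonempty S] (n : ℕ) (z : S → ℤ) :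
    meetProb n z ≤ modeBound (Fintype.card S) n := by
  have : ∀ k, ∀ z : S → ℤ, (shiftAvg 1)^[k] (walkProb n) z ≤ modeBound (Fintype.card S) n := by
    intro k
    induction k with
    | zero => exact walkProb_le_modeBound n
    | succ k ih =>
      intro z
      rw [Function.iterate_succ_apply']
      refine (shiftAvg_mono 1 ih z).trans_eq ?_
      rw [shiftAvg_const]
  exact this n z

theorem modeBound_antitone {D : ℕ} (hD : 0 < D) : Antitone (modeBound D) := by
  refine antitone_nat_of_succ_le fun n => ?_
  rw [modeBound_succ]
  refine mul_le_of_le_one_right (modeBound_nonneg _ _) ?_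
  rw [div_le_one (by positivity)]
  have := Nat.lt_mul_div_succ n hD
  exact_mod_cast this

theorem modeBound_block {D : ℕ} (hD : 8 ≤ D) (a : ℕ) :
    modeBound D ((a + 1) * D) ≤ modeBound D (a * D) * ((a + 1) / (a + 2)) ^ 2 := by
  have hD0 : 0 < D := by omega
  have hDr : (8 : ℝ) ≤ D := by exact_mod_cast hD
  have hstep : ∀ i < 4, modeBound D (a * D + i + 1) ≤
      modeBound D (a * D + i) * ((2 * a + 1) / (2 * a + 2)) := by
    intro i hi
    rw [modeBound_succ]
    refine mul_le_mul_of_nonneg_left ?_ (modeBound_nonneg _ _)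
    have hdiv : (a * D + i) / D = a := by
      rw [mul_comm, Nat.mul_add_div hD0, Nat.div_eq_of_lt (by omega), add_zero]
    have hi' : (i : ℝ) ≤ 3 := by exact_mod_cast Nat.le_of_lt_succ hi
    rw [hdiv, div_le_div_iff₀ (by positivity) (by positivity)]
    push_cast
    have ha : (0 : ℝ) ≤ a := Nat.cast_nonneg a
    nlinarith
  have hr0 : (0 : ℝ) ≤ (2 * a + 1) / (2 * a + 2) := by positivity
  have h4 : modeBound D (a * D + 4) ≤
      modeBound D (a * D) * ((2 * a + 1) / (2 * a + 2)) ^ 4 := by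
    calc modeBound D (a * D + 4) ≤ _ := hstep 3 (by norm_num)
      _ ≤ _ := mul_le_mul_of_nonneg_right (hstep 2 (by norm_num)) hr0
      _ ≤ _ := mul_le_mul_of_nonneg_right
        (mul_le_mul_of_nonneg_right (hstep 1 (by norm_num)) hr0) hr0
      _ ≤ _ := mul_le_mul_of_nonneg_right (mul_le_mul_of_nonneg_right
        (mul_le_mul_of_nonneg_right (hstep 0 (by norm_num)) hr0) hr0) hr0
      _ = _ := by simp only [add_zero]; ring
  refine (modeBound_antitone hD0 (by nlinarith : a * D + 4 ≤ (a + 1) * D)).trans (h4.trans ?_)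
  refine mul_le_mul_of_nonneg_left ?_ (modeBound_nonneg _ _)
  have hsq : ((2 * a + 1 : ℝ) / (2 * a + 2)) ^ 2 ≤ (a + 1) / (a + 2) := by
    rw [div_pow, div_le_div_iff₀ (by positivity) (by positivity)]
    have ha : (0 : ℝ) ≤ a := Nat.cast_nonneg a
    nlinarith
  calc ((2 * a + 1 : ℝ) / (2 * a + 2)) ^ 4 = (((2 * a + 1 : ℝ) / (2 * a + 2)) ^ 2) ^ 2 := by ring
    _ ≤ _ := pow_le_pow_left₀ (by positivity) hsq 2

theorem modeBound_one (D : ℕ) : modeBound D 1 = 1 / D := by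
  simp [modeBound]

theorem modeBound_three {D : ℕ} (hD : 8 ≤ D) : modeBound D 3 = 6 / (D : ℝ) ^ 3 := by
  have h1 : 1 / D = 0 := Nat.div_eq_of_lt (by omega)
  have h2 : 2 / D = 0 := Nat.div_eq_of_lt (by omega)
  simp only [modeBound, Finset.prod_range_succ, Finset.prod_range_zero, h1, h2, Nat.zero_div]
  have : (D : ℝ) ≠ 0 := by positivity
  push_cast
  field_simp
  norm_num

theorem modeBound_mul_le {D : ℕ} (hD : 8 ≤ D) (a : ℕ) :
    modeBound D ((a + 1) * D) ≤ 24 / ((D : ℝ) ^ 3 * (a + 2) ^ 2) := by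
  induction a with
  | zero =>
    refine (modeBound_antitone (by omega) (by omega : 3 ≤ (0 + 1) * D)).trans ?_
    rw [modeBound_three hD, div_le_div_iff₀ (by positivity) (by positivity)]
    push_cast
    linarith
  | succ a ih =>
    refine (modeBound_block hD (a + 1)).trans
      ((mul_le_mul_of_nonneg_right ih (by positivity)).trans_eq ?_)
    push_cast
    field_simp
    ring

theorem modeBound_le {D : ℕ} (hD : 8 ≤ D) {n : ℕ} (hn : 3 ≤ n) :
    modeBound D n ≤ 24 / (D : ℝ) ^ 3 * (1 / ((n / D : ℕ) + 1) ^ 2) := by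
  rcases hcase : n / D with _ | a
  · refine (modeBound_antitone (by omega) hn).trans ?_
    rw [modeBound_three hD]
    simp only [Nat.cast_zero, zero_add, one_pow, div_one, mul_one]
    gcongr
    norm_num
  · have hle : (a + 1) * D ≤ n := by rw [← hcase]; exact Nat.div_mul_le_self n D
    refine (modeBound_antitone (by omega) hle).trans ((modeBound_mul_le hD a).trans_eq ?_)
    push_cast
    field_simp
    ring

theorem sum_inv_sq_div_le {D : ℕ} (hD : 0 < D) (A : ℕ) :
    ∑ n ∈ Finset.range (A * D), (1 : ℝ) / (((n / D : ℕ) : ℝ) + 1) ^ 2 ≤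
      (D : ℝ) * (2 - 2 / ((A : ℝ) + 1)) := by
  induction A with
  | zero => simp
  | succ A ih =>
    rw [Nat.succ_mul, Finset.sum_range_add]
    have hblock : ∀ i ∈ Finset.range D,
        (1 : ℝ) / ((((A * D + i) / D : ℕ) : ℝ) + 1) ^ 2 = 1 / ((A : ℝ) + 1) ^ 2 := by
      intro i hi
      rw [mul_comm A D, Nat.mul_add_div hD, Nat.div_eq_of_lt (Finset.mem_range.1 hi), add_zero]
    rw [Finset.sum_congr rfl hblock, Finset.sum_const, Finset.card_range, nsmul_eq_mul]
    have hA : (0 : ℝ) ≤ A := Nat.cast_nonneg A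
    have : 1 / ((A : ℝ) + 1) ^ 2 ≤ 2 / ((A : ℝ) + 1) - 2 / (((A + 1 : ℕ) : ℝ) + 1) := by
      have e : 2 / ((A : ℝ) + 1) - 2 / (((A + 1 : ℕ) : ℝ) + 1) = 2 / ((A + 1) * (A + 2)) := by
        push_cast
        field_simp
        ring
      rw [e, div_le_div_iff₀ (by positivity) (by positivity)]
      nlinarith
    have := mul_le_mul_of_nonneg_left this (Nat.cast_nonneg (α := ℝ) D)
    linarith

theorem sum_meetProb_le [Nonempty S] (hD : 8 ≤ Fintype.card S) (N : ℕ) (z : S → ℤ) :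
    ∑ n ∈ Finset.range N, meetProb (n + 1) z ≤ 50 / Fintype.card S := by
  set D := Fintype.card S with hDdef
  have hD0 : 0 < D := by omega
  have hDr : (8 : ℝ) ≤ D := by exact_mod_cast hD
  have hterm : ∀ n ∈ Finset.range N, meetProb (n + 1) z ≤ (if n < 2 then 1 / (D : ℝ) else 0) +
      24 / (D : ℝ) ^ 3 * (1 / ((((n + 1) / D : ℕ) : ℝ) + 1) ^ 2) := by
    intro n _
    refine (meetProb_le_modeBound (n + 1) z).trans ?_
    split_ifs with hn
    · refine (modeBound_antitone hD0 (by omega : 1 ≤ n + 1)).trans ?_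
      rw [modeBound_one]
      exact le_add_of_nonneg_right (by positivity)
    · rw [zero_add]
      exact modeBound_le hD (by omega)
  refine (Finset.sum_le_sum hterm).trans ?_
  rw [Finset.sum_add_distrib, ← Finset.mul_sum]
  have h1 : ∑ n ∈ Finset.range N, (if n < 2 then 1 / (D : ℝ) else 0) ≤ 2 * (1 / D) := by
    rw [← Finset.sum_filter, Finset.sum_const, nsmul_eq_mul]
    have : ((Finset.range N).filter (· < 2)).card ≤ 2 :=
      (Finset.card_le_card fun n hn => Finset.mem_range.2 (Finset.mem_filter.1 hn).2).trans_eq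
        (Finset.card_range 2)
    exact mul_le_mul_of_nonneg_right (by exact_mod_cast this) (by positivity)
  have h2 : ∑ n ∈ Finset.range N, (1 : ℝ) / ((((n + 1) / D : ℕ) : ℝ) + 1) ^ 2 ≤ 2 * (D : ℝ) := by
    have hle : ∑ n ∈ Finset.range N, (1 : ℝ) / ((((n + 1) / D : ℕ) : ℝ) + 1) ^ 2 ≤
        ∑ n ∈ Finset.range ((N + 1) * D), (1 : ℝ) / (((n / D : ℕ) : ℝ) + 1) ^ 2 := by
      refine le_trans ?_ (Finset.sum_le_sum_of_subset_of_nonneg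
        (Finset.range_subset_range.2 (by nlinarith : N + 1 ≤ (N + 1) * D))
        fun _ _ _ => by positivity)
      rw [Finset.sum_range_succ' _ N]
      exact le_add_of_nonneg_right (by positivity)
    refine hle.trans ((sum_inv_sq_div_le hD0 (N + 1)).trans ?_)
    have : (0 : ℝ) ≤ 2 / (((N + 1 : ℕ) : ℝ) + 1) := by positivity
    nlinarith
  have h3 : 24 / (D : ℝ) ^ 3 * (2 * D) ≤ 48 * (1 / D) := by
    have e : 24 / (D : ℝ) ^ 3 * (2 * D) = 48 * (1 / D) * (1 / D) := by field_simp; norm_num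
    rw [e]
    refine mul_le_of_le_one_right (by positivity) ?_
    rw [div_le_one (by positivity)]
    linarith
  have h4 := mul_le_mul_of_nonneg_left h2 (by positivity : (0 : ℝ) ≤ 24 / (D : ℝ) ^ 3)
  have e : (50 : ℝ) / D = 2 * (1 / D) + 48 * (1 / D) := by ring
  rw [e]
  linarith

/-- The sites visited, before the last step, by the oriented path with steps `l` from `x`. -/
def visited : (S → ℤ) → List S → Finset (S → ℤ)
  | _, [] => ∅
  | x, s :: l => insert x (visited (x + Pi.single s 1) l)

theorem sum_le_of_mem_visited {x y : S → ℤ} {l : List S} (h : y ∈ visited x l) :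
    ∑ s, x s ≤ ∑ s, y s := by
  induction l generalizing x with
  | nil => simp [visited] at h
  | cons s l ih =>
    rcases Finset.mem_insert.1 h with rfl | h
    · exact le_rfl
    · have := ih h
      rw [sum_add_single] at this
      omega

theorem card_visited (x : S → ℤ) (l : List S) : (visited x l).card = l.length := by
  induction l generalizing x with
  | nil => rfl
  | cons s l ih =>
    rw [visited, Finset.card_insert_of_notMem, ih, List.length_cons]
    intro h
    have := sum_le_of_mem_visited h
    rw [sum_add_single] at this
    omega

theorem card_visited_union_cons {x y : S → ℤ} (hxy : ∑ s, x s = ∑ s, y s) (s t : S)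
    (l m : List S) : (visited x (s :: l) ∪ visited y (t :: m)).card =
      (if x = y then 1 else 2) +
        (visited (x + Pi.single s 1) l ∪ visited (y + Pi.single t 1) m).card := by
  have hnot : ∀ z : S → ℤ, ∑ s, z s = ∑ s, x s →
      z ∉ visited (x + Pi.single s 1) l ∪ visited (y + Pi.single t 1) m := by
    intro z hz h
    rcases Finset.mem_union.1 h with h | h <;>
    · have := sum_le_of_mem_visited h
      rw [sum_add_single] at this
      omega
  have e : visited x (s :: l) ∪ visited y (t :: m) =
      insert x (insert y (visited (x + Pi.single s 1) l ∪ visited (y + Pi.single t 1) m)) := by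
    ext z
    simp only [visited, Finset.mem_union, Finset.mem_insert]
    tauto
  rw [e]
  split_ifs with h
  · subst h
    rw [Finset.insert_idem, Finset.card_insert_of_notMem (hnot _ rfl), add_comm]
  · rw [Finset.card_insert_of_notMem, Finset.card_insert_of_notMem (hnot _ hxy.symm)]
    · omega
    · rw [Finset.mem_insert, not_or]
      exact ⟨h, hnot _ rfl⟩

/-- The sum over all pairs of `N`-step paths from `x` and `y` of the probability that every
site visited by either of them is closed. -/
noncomputable def pairSum (q : ℝ) (N : ℕ) (x y : S → ℤ) : ℝ :=
  ∑ w : Fin N → S, ∑ w' : Fin N → S,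
    q ^ (visited x (List.ofFn w) ∪ visited y (List.ofFn w')).card

theorem pairSum_succ (q : ℝ) (N : ℕ) {x y : S → ℤ} (hxy : ∑ s, x s = ∑ s, y s) :
    pairSum q (N + 1) x y = q ^ (if x = y then 1 else 2) *
      ∑ s, ∑ t, pairSum q N (x + Pi.single s 1) (y + Pi.single t 1) := by
  have h : ∀ l : List S, ∑ w' : Fin (N + 1) → S, q ^ (visited x l ∪ visited y (List.ofFn w')).card
      = ∑ t, ∑ w' : Fin N → S, q ^ (visited x l ∪ visited y (t :: List.ofFn w')).card :=
    fun l => sum_word_succ N fun l' => q ^ (visited x l ∪ visited y l').card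
  unfold pairSum
  rw [sum_word_succ N fun l => ∑ w' : Fin (N + 1) → S,
    q ^ (visited x l ∪ visited y (List.ofFn w')).card]
  simp only [h, card_visited_union_cons hxy, pow_add, Finset.mul_sum]
  refine Finset.sum_congr rfl fun s _ => ?_
  rw [Finset.sum_comm]

/-- Supersolution that controls the exponential moment of the number of meetings. -/
noncomputable def meetBound (c : ℝ) (N : ℕ) (z : S → ℤ) : ℝ :=
  1 + c * ∑ n ∈ Finset.range N, meetProb (n + 1) z

theorem shiftAvg_add (ε : ℤ) (f g : (S → ℤ) → ℝ) :
    shiftAvg ε (fun x => f x + g x) = fun x => shiftAvg ε f x + shiftAvg ε g x := by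
  funext x
  simp [shiftAvg, Finset.sum_add_distrib, add_div]

theorem shiftAvg_const_mul (ε : ℤ) (c : ℝ) (f : (S → ℤ) → ℝ) :
    shiftAvg ε (fun x => c * f x) = fun x => c * shiftAvg ε f x := by
  funext x
  simp [shiftAvg, ← Finset.mul_sum, mul_div_assoc]

theorem shiftAvg_sum (ε : ℤ) (N : ℕ) (f : ℕ → (S → ℤ) → ℝ) :
    shiftAvg ε (fun x => ∑ n ∈ Finset.range N, f n x) =
      fun x => ∑ n ∈ Finset.range N, shiftAvg ε (f n) x := by
  funext x
  simp only [shiftAvg]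
  rw [Finset.sum_comm, Finset.sum_div]

theorem meetProb_zero : meetProb (S := S) 0 = originInd := rfl

theorem shiftAvg_meetBound [Nonempty S] (c k : ℝ) (N : ℕ) (z : S → ℤ) :
    shiftAvg 1 (shiftAvg (-1) fun z => meetBound c N z + k * originInd z) z =
      1 + c * ∑ n ∈ Finset.range N, meetProb (n + 2) z + k * meetProb 1 z := by
  simp only [meetBound, shiftAvg_add, shiftAvg_const, shiftAvg_const_mul, shiftAvg_sum,
    ← meetProb_zero, ← meetProb_succ]

theorem pairSum_le [Nonempty S] {q c : ℝ} (hq : 0 < q) (hq1 : q ≤ 1)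
    (hc : ∀ N, (q⁻¹ - 1) * meetBound (S := S) c N 0 ≤ c) (N : ℕ) {x y : S → ℤ}
    (hxy : ∑ s, x s = ∑ s, y s) :
    pairSum q N x y ≤ (q * Fintype.card S) ^ (2 * N) *
      ((if x = y then q⁻¹ else 1) * meetBound c N (x - y)) := by
  have hcard : (0 : ℝ) < Fintype.card S := by exact_mod_cast Fintype.card_pos
  induction N generalizing x y with
  | zero =>
    have : (1 : ℝ) ≤ if x = y then q⁻¹ else 1 := by
      split_ifs
      · exact (one_le_inv₀ hq).2 hq1
      · exact le_rfl
    simpa [pairSum, visited, meetBound] using this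
  | succ N ih =>
    have hsite : ∀ s t, pairSum q N (x + Pi.single s 1) (y + Pi.single t 1) ≤
        (q * Fintype.card S) ^ (2 * N) *
          (meetBound c N (x - y + Pi.single s 1 + Pi.single t (-1)) +
            c * originInd (x - y + Pi.single s 1 + Pi.single t (-1))) := by
      intro s t
      refine (ih (by simp only [sum_add_single, hxy])).trans
        (mul_le_mul_of_nonneg_left ?_ (by positivity))
      have e : x + Pi.single s 1 - (y + Pi.single t 1) =
          x - y + Pi.single s 1 + Pi.single t (-1) := by
        rw [Pi.single_neg]; abel
      have e' : x + Pi.single s 1 = y + Pi.single t 1 ↔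
          x - y + Pi.single s 1 + Pi.single t (-1) = 0 := by rw [← e, sub_eq_zero]
      rw [e]
      simp only [e', originInd]
      split_ifs with h0
      · rw [h0]
        have := hc N
        linarith
      · simp
    have hpre : q ^ (if x = y then 1 else 2) = q ^ 2 * (if x = y then q⁻¹ else 1) := by
      split_ifs
      · field_simp
      · simp
    have hpre0 : (0 : ℝ) ≤ if x = y then q⁻¹ else 1 := by split_ifs <;> positivity
    rw [pairSum_succ q N hxy, hpre]
    have havg : ∑ s, ∑ t, (meetBound c N (x - y + Pi.single s 1 + Pi.single t (-1)) +
            c * originInd (x - y + Pi.single s 1 + Pi.single t (-1))) =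
        (Fintype.card S : ℝ) ^ 2 * meetBound c (N + 1) (x - y) := by
      have h := shiftAvg_meetBound c c N (x - y)
      have h' : meetBound c (N + 1) (x - y) =
          1 + c * ∑ n ∈ Finset.range N, meetProb (n + 2) (x - y) + c * meetProb 1 (x - y) := by
        rw [meetBound, Finset.sum_range_succ']
        ring
      rw [h', ← h]
      simp only [shiftAvg, ← Finset.sum_div]
      field_simp
    calc q ^ 2 * (if x = y then q⁻¹ else 1) *
          ∑ s, ∑ t, pairSum q N (x + Pi.single s 1) (y + Pi.single t 1)
        ≤ q ^ 2 * (if x = y then q⁻¹ else 1) * ∑ s, ∑ t, (q * Fintype.card S) ^ (2 * N) *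
          (meetBound c N (x - y + Pi.single s 1 + Pi.single t (-1)) +
            c * originInd (x - y + Pi.single s 1 + Pi.single t (-1))) :=
          mul_le_mul_of_nonneg_left (Finset.sum_le_sum fun s _ => Finset.sum_le_sum fun t _ =>
            hsite s t) (by positivity)
      _ = _ := by
          simp only [← Finset.mul_sum]
          rw [havg]
          ring

theorem pairSum_self_le [Nonempty S] {q : ℝ} (hq : 0 < q) (hq1 : q ≤ 1)
    (hD : 8 ≤ Fintype.card S) (hqD : 100 ≤ q * Fintype.card S) (N : ℕ) (x : S → ℤ) :
    pairSum q N x x ≤ (q * Fintype.card S) ^ (2 * N) * (2 * q⁻¹) := by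
  have hcard : (0 : ℝ) < Fintype.card S := by exact_mod_cast Fintype.card_pos
  have hinv : 1 ≤ q⁻¹ := (one_le_inv₀ hq).2 hq1
  have hmeet : ∀ N, meetBound (S := S) (2 * (q⁻¹ - 1)) N 0 ≤ 2 := by
    intro N
    have h1 := mul_le_mul_of_nonneg_left (sum_meetProb_le hD N (0 : S → ℤ))
      (by linarith : 0 ≤ 2 * (q⁻¹ - 1))
    have h2 : 2 * (q⁻¹ - 1) * (50 / Fintype.card S) ≤ 1 := by
      have : 2 * q⁻¹ * (50 / Fintype.card S) ≤ 1 := by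
        have e : 2 * q⁻¹ * (50 / Fintype.card S) = 100 / (q * Fintype.card S) := by
          field_simp; norm_num
        rw [e, div_le_one (by positivity)]
        exact hqD
      have : (0 : ℝ) ≤ 50 / Fintype.card S := by positivity
      linarith
    rw [meetBound]
    linarith
  refine (pairSum_le hq hq1 (c := 2 * (q⁻¹ - 1)) (fun N => ?_) N rfl).trans ?_
  · have := mul_le_mul_of_nonneg_left (hmeet N) (by linarith : 0 ≤ q⁻¹ - 1)
    linarith
  · rw [if_pos rfl, sub_self, mul_comm 2 q⁻¹]
    have := hmeet N
    gcongr

/-- Second-moment lower bound for the probability that one of the paths in `G` is closed. -/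
theorem measure_exists_closed_path_ge [Nonempty S] {ι : Type*} {q : ℝ} (hq : 0 < q) (hq1 : q ≤ 1)
    (hD : 8 ≤ Fintype.card S) (hqD : 100 ≤ q * Fintype.card S) {P : Measure (ι → Bool)}
    (hP : IsBernoulli (1 - q) P) {σ : (S → ℤ) → ι} (hσ : Function.Injective σ) {N : ℕ}
    (G : Finset (Fin N → S)) (hG : (Fintype.card S : ℝ) ^ N ≤ 2 * G.card) :
    ∃ A, MeasurableSet A ∧ q / 8 ≤ P.real A ∧
      ∀ ω ∈ A, ∃ w ∈ G, ∀ x ∈ visited 0 (List.ofFn w), ω (σ x) = false := by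
  have := hP.1
  have hcard : (0 : ℝ) < Fintype.card S := by exact_mod_cast Fintype.card_pos
  set E : (Fin N → S) → Set (ι → Bool) :=
    fun w => {ω | ∀ x ∈ visited 0 (List.ofFn w), ω (σ x) = false} with hE
  have hmeas : ∀ s : Finset (S → ℤ), MeasurableSet {ω : ι → Bool | ∀ x ∈ s, ω (σ x) = false} := by
    intro s
    have : {ω : ι → Bool | ∀ x ∈ s, ω (σ x) = false} =
        ⋂ x ∈ s, (fun ω : ι → Bool => ω (σ x)) ⁻¹' {false} := by ext; simp
    rw [this]
    exact Finset.measurableSet_biInter _ fun x _ => measurable_pi_apply _ (measurableSet_singleton _)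
  have hreal : ∀ s : Finset (S → ℤ), P.real {ω | ∀ x ∈ s, ω (σ x) = false} = q ^ s.card := by
    intro s
    rw [Measure.real, hP.measure_closed hσ, _root_.sub_sub_cancel, ENNReal.toReal_pow,
      ENNReal.toReal_ofReal hq.le]
  have hEm : ∀ w, MeasurableSet (E w) := fun w => hmeas _
  have hinter : ∀ w w', P.real (E w ∩ E w') =
      q ^ (visited 0 (List.ofFn w) ∪ visited 0 (List.ofFn w')).card := by
    intro w w'
    rw [← hreal]
    congr 1
    ext ω
    simp only [hE, Set.mem_inter_iff, Set.mem_ofPred_eq, Finset.mem_union]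
    exact ⟨fun h x hx => hx.elim (h.1 x) (h.2 x), fun h => ⟨fun x hx => h x (.inl hx),
      fun x hx => h x (.inr hx)⟩⟩
  set A : Set (ι → Bool) := ⋃ w ∈ G, E w with hA
  have hAE : ∀ ω ∈ A, ∃ w ∈ G, ω ∈ E w := fun ω hω => by simpa [hA] using hω
  have hAm : MeasurableSet A := Finset.measurableSet_biUnion _ fun w _ => hEm w
  have hindInt : ∀ B : Set (ι → Bool), MeasurableSet B → Integrable (B.indicator (1 : (ι → Bool) → ℝ)) P :=
    fun B hB => (integrable_const (1 : ℝ)).indicator hB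
  set X : (ι → Bool) → ℝ := fun ω => ∑ w ∈ G, (E w).indicator (1 : (ι → Bool) → ℝ) ω with hX
  have hXX : ∀ ω, X ω ^ 2 = ∑ w ∈ G, ∑ w' ∈ G, (E w ∩ E w').indicator (1 : (ι → Bool) → ℝ) ω := by
    intro ω
    rw [sq, hX, Finset.sum_mul_sum]
    simp only [Set.inter_indicator_one, Pi.mul_apply]
  have hXi : Integrable X P := integrable_finsetSum _ fun w _ => hindInt _ (hEm w)
  have hXXi : Integrable (fun ω => X ω ^ 2) P := by
    simp only [hXX]
    exact integrable_finsetSum _ fun w _ => integrable_finsetSum _ fun w' _ =>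
      hindInt _ ((hEm w).inter (hEm w'))
  have hEX : ∫ ω, X ω ∂P = G.card * q ^ N := by
    rw [hX, integral_finsetSum _ fun w _ => hindInt _ (hEm w)]
    simp only [integral_indicator_one (hEm _)]
    simp only [hE, hreal, card_visited, List.length_ofFn, Finset.sum_const, nsmul_eq_mul]
  set M : ℝ := (q * Fintype.card S) ^ (2 * N) * (2 * q⁻¹) with hM
  have hM0 : 0 < M := by positivity
  have hEXX : ∫ ω, X ω ^ 2 ∂P ≤ M := by
    refine le_trans ?_ (pairSum_self_le hq hq1 hD hqD N 0)
    simp only [hXX]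
    rw [integral_finsetSum _ fun w _ => integrable_finsetSum _ fun w' _ =>
      hindInt _ ((hEm w).inter (hEm w'))]
    have h1 : ∀ w, ∫ ω, ∑ w' ∈ G, (E w ∩ E w').indicator (1 : (ι → Bool) → ℝ) ω ∂P =
        ∑ w' ∈ G, q ^ (visited 0 (List.ofFn w) ∪ visited 0 (List.ofFn w')).card := by
      intro w
      rw [integral_finsetSum _ fun w' _ => hindInt _ ((hEm w).inter (hEm w'))]
      exact Finset.sum_congr rfl fun w' _ => by
        rw [integral_indicator_one ((hEm w).inter (hEm w')), hinter]
    simp only [h1, pairSum]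
    refine (Finset.sum_le_sum fun w _ => Finset.sum_le_univ_sum_of_nonneg fun _ => by
      positivity).trans (Finset.sum_le_univ_sum_of_nonneg fun _ =>
        Finset.sum_nonneg fun _ _ => by positivity)
  have hmain : ∀ r : ℝ, 2 * r * (G.card * q ^ N) - r ^ 2 * M ≤ P.real A := by
    intro r
    have hpt : ∀ ω, 2 * r * X ω - r ^ 2 * X ω ^ 2 ≤ A.indicator (1 : (ι → Bool) → ℝ) ω := by
      intro ω
      by_cases hω : ω ∈ A
      · rw [Set.indicator_of_mem hω, Pi.one_apply]
        nlinarith [sq_nonneg (1 - r * X ω)]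
      · have : X ω = 0 := Finset.sum_eq_zero fun w hw =>
          Set.indicator_of_notMem (fun h => hω (Set.mem_biUnion hw h)) _
        rw [Set.indicator_of_notMem hω, this]
        simp
    have h := integral_mono ((hXi.const_mul (2 * r)).sub (hXXi.const_mul (r ^ 2))) (hindInt A hAm) hpt
    rw [integral_indicator_one hAm] at h
    have h' : ∫ ω, (2 * r * X ω - r ^ 2 * X ω ^ 2) ∂P =
        2 * r * (G.card * q ^ N) - r ^ 2 * ∫ ω, X ω ^ 2 ∂P := by
      rw [integral_sub (hXi.const_mul (2 * r)) (hXXi.const_mul (r ^ 2)), integral_const_mul,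
        integral_const_mul, hEX]
    have h2 := mul_le_mul_of_nonneg_left hEXX (sq_nonneg r)
    calc 2 * r * (G.card * q ^ N) - r ^ 2 * M
        ≤ ∫ ω, (2 * r * X ω - r ^ 2 * X ω ^ 2) ∂P := by rw [h']; linarith
      _ ≤ _ := h
  have hY : (q * Fintype.card S) ^ N / 2 ≤ G.card * q ^ N := by
    rw [mul_pow]
    have := mul_le_mul_of_nonneg_left hG (by positivity : 0 ≤ q ^ N)
    linarith
  set Y : ℝ := G.card * q ^ N
  have hfin := hmain (Y / M)
  have e : 2 * (Y / M) * Y - (Y / M) ^ 2 * M = Y ^ 2 / M := by field_simp; ring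
  rw [e] at hfin
  refine ⟨A, hAm, le_trans ?_ hfin, hAE⟩
  rw [le_div_iff₀ hM0]
  have e2 : q / 8 * M = ((q * Fintype.card S) ^ N / 2) ^ 2 := by
    rw [hM, pow_mul']
    field_simp
    norm_num
  rw [e2]
  exact pow_le_pow_left₀ (by positivity) hY 2

end OrientedWalk

/-- The point of `ℤ^d` whose coordinates from `k` on are given by `x` and whose others vanish. -/
def flatPoint (d k : ℕ) (x : Option (Fin (d - k)) → ℤ) : Fin d → ℤ :=
  fun j => if h : k ≤ (j : ℕ) then x (some ⟨j - k, by omega⟩) else 0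

theorem planeHt_flatPoint (α : ℝ) (d k : ℕ) (x : Option (Fin (d - k)) → ℤ) :
    planeHt α (etaK d k) (flatPoint d k x) = 0 := by
  have : ∑ i, ((etaK d k i : ℤ) : ℝ) * ((flatPoint d k x i : ℤ) : ℝ) = 0 :=
    Finset.sum_eq_zero fun i _ => by
      by_cases h : (i : ℕ) < k
      · simp [flatPoint, h]
      · simp [etaK, h]
  simp [planeHt, this]

theorem flatPoint_add_none (d k : ℕ) (x : Option (Fin (d - k)) → ℤ) (ε : ℤ) :
    flatPoint d k (x + Pi.single none ε) = flatPoint d k x := by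
  funext j
  simp [flatPoint]

theorem flatPoint_add_some (d k : ℕ) (x : Option (Fin (d - k)) → ℤ) (i : Fin (d - k)) :
    ∑ j, |flatPoint d k (x + Pi.single (some i) 1) j - flatPoint d k x j| = 1 := by
  have hi : k + (i : ℕ) < d := by omega
  rw [Finset.sum_eq_single (⟨k + i, hi⟩ : Fin d)]
  · simp [flatPoint]
  · intro j _ hj
    by_cases h : k ≤ (j : ℕ)
    · have hne : (⟨j - k, by omega⟩ : Fin (d - k)) ≠ i := by
        intro h'
        have := congrArg Fin.val h'
        exact hj (Fin.ext (by simp at this ⊢; omega))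
      simp [flatPoint, h, hne]
    · simp [flatPoint, h]
  · simp

theorem flatSite_injective (d k : ℕ) (g : ℤ) : Function.Injective
    fun x : Option (Fin (d - k)) → ℤ => (Fin.snoc (flatPoint d k x) (g - x none) : Site d) := by
  intro x y hxy
  obtain ⟨h1, h2⟩ := Fin.snoc_injective2 hxy
  funext s
  rcases s with _ | i
  · omega
  · have := congrFun h1 ⟨k + i, by omega⟩
    simpa [flatPoint] using this

/-- A closed oriented path that descends below height `0` blocks every open Lipschitz surface
that passes at or below its starting point. -/
theorem lt_of_closed_path {d k : ℕ} {ω : Config d} {F : (Fin d → ℤ) → ℤ} (hF : IsLipschitzFn F)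
    (hopen : ∀ x, ω (Fin.snoc x (F x)) = true) (hpos : ∀ x, 0 < F (flatPoint d k x)) {g : ℤ}
    {l : List (Option (Fin (d - k)))} {x : Option (Fin (d - k)) → ℤ}
    (hcl : ∀ y ∈ visited x l, ω (Fin.snoc (flatPoint d k y) (g - y none)) = false)
    (hg : g ≤ x none + l.count none) : g - x none < F (flatPoint d k x) := by
  induction l generalizing x with
  | nil =>
    have := hpos x
    simp at hg
    omega
  | cons s l ih =>
    have hx := hcl x (Finset.mem_insert_self _ _)
    have hne : F (flatPoint d k x) ≠ g - x none := by
      intro h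
      rw [← h, hopen] at hx
      cases hx
    have hrec := @ih (x + Pi.single s 1) fun y hy => hcl y (Finset.mem_insert_of_mem hy)
    rcases s with _ | i
    · rw [flatPoint_add_none] at hrec
      simp at hrec hg
      have := hrec (by omega)
      omega
    · simp at hrec hg
      have h1 := hrec hg
      have h2 := hF _ _ (flatPoint_add_some d k x i)
      rw [abs_le] at h2
      omega

/-- For large `N`, at least half of the words of length `N` contain a given letter `g` times. -/
theorem exists_card_words_le {S : Type*} [Fintype S] [DecidableEq S] (a : S) (g : ℕ) :
    ∃ N : ℕ, (Fintype.card S : ℝ) ^ N ≤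
      2 * ((Finset.univ.filter fun w : Fin N → S => g ≤ (List.ofFn w).count a).card : ℝ) := by
  have hD : (1 : ℝ) ≤ Fintype.card S := by exact_mod_cast Fintype.card_pos_iff.2 ⟨a⟩
  set D : ℝ := (Fintype.card S : ℝ) with hDdef
  have hlim : Tendsto (fun N : ℕ => ((D - 1 / 2) / D) ^ N) atTop (nhds 0) :=
    tendsto_pow_atTop_nhds_zero_of_lt_one (div_nonneg (by linarith) (by linarith))
      ((div_lt_one (by linarith)).2 (by linarith))
  obtain ⟨N, hN⟩ := (hlim.eventually (gt_mem_nhds (by positivity :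
    (0 : ℝ) < 1 / (2 * 2 ^ g)))).exists
  refine ⟨N, ?_⟩
  have hprod : ∀ l : List S, (l.map fun s => if s = a then (1 / 2 : ℝ) else 1).prod =
      (1 / 2) ^ l.count a := by
    intro l
    induction l with
    | nil => simp
    | cons s l ih =>
      rw [List.map_cons, List.prod_cons, ih]
      by_cases h : s = a
      · subst h; simp [pow_succ']
      · simp [h]
  have hsum : ∑ w : Fin N → S, (1 / 2 : ℝ) ^ (List.ofFn w).count a = (D - 1 / 2) ^ N := by
    have h1 : ∑ s, (if s = a then (1 / 2 : ℝ) else 1) = D - 1 / 2 := by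
      have : ∀ s, (if s = a then (1 / 2 : ℝ) else 1) = 1 - if s = a then 1 / 2 else 0 := by
        intro s; split_ifs <;> norm_num
      simp only [this, Finset.sum_sub_distrib]
      simp [hDdef]
    rw [← h1, Fintype.sum_pow]
    refine Finset.sum_congr rfl fun w _ => ?_
    rw [← hprod, List.map_ofFn, List.prod_ofFn]
    rfl
  have hpt : ∀ w : Fin N → S, (1 : ℝ) ≤ (if g ≤ (List.ofFn w).count a then 1 else 0) +
      2 ^ g * (1 / 2) ^ (List.ofFn w).count a := by
    intro w
    split_ifs with h
    · exact le_add_of_nonneg_right (by positivity)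
    · rw [zero_add, one_div, inv_pow, ← div_eq_mul_inv, one_le_div (by positivity)]
      exact pow_le_pow_right₀ (by norm_num) (by omega)
  have htot := Finset.sum_le_sum fun w (_ : w ∈ Finset.univ) => hpt w
  rw [Finset.sum_add_distrib, ← Finset.mul_sum, hsum, Finset.sum_boole] at htot
  have hone : ∑ _w : Fin N → S, (1 : ℝ) = D ^ N := by simp [hDdef]
  rw [hone] at htot
  have hDN : 0 < D ^ N := pow_pos (by linarith) N
  rw [div_pow, div_lt_div_iff₀ hDN (by positivity)] at hN
  linarith

theorem measure_LIP_ne_one {d k : ℕ} {α q : ℝ} (hq : 0 < q) (hq1 : q ≤ 1) (hdk : 7 ≤ d - k)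
    (hqd : 100 ≤ q * ((d - k : ℕ) + 1)) {P : Measure (Config d)} (hP : IsBernoulli (1 - q) P) :
    P (LIP α (etaK d k)) ≠ 1 := by
  have := hP.1
  set T : ℕ → Set (Config d) := fun g => {ω | ∃ F : (Fin d → ℤ) → ℤ, IsLipschitzFn F ∧
    (∀ x : Fin d → ℤ, ω (Fin.snoc x (F x)) = true ∧ planeHt α (etaK d k) x < F x) ∧ F 0 ≤ g}
  have hTmono : Monotone T := fun g g' hg ω ⟨F, h1, h2, h3⟩ =>
    ⟨F, h1, h2, h3.trans (by exact_mod_cast hg)⟩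
  have hLIP : LIP α (etaK d k) = ⋃ g, T g := by
    ext ω
    refine ⟨fun ⟨F, h1, h2⟩ => Set.mem_iUnion.2 ⟨(F 0).toNat, F, h1, h2, Int.self_le_toNat _⟩,
      fun h => ?_⟩
    obtain ⟨g, F, h1, h2, -⟩ := Set.mem_iUnion.1 h
    exact ⟨F, h1, h2⟩
  have hbound : ∀ g, P (T g) ≤ ENNReal.ofReal (1 - q / 8) := by
    intro g
    obtain ⟨N, hN⟩ := exists_card_words_le (none : Option (Fin (d - k))) g
    have hcard : Fintype.card (Option (Fin (d - k))) = d - k + 1 := by simp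
    obtain ⟨A, hAm, hge, hAw⟩ := measure_exists_closed_path_ge (S := Option (Fin (d - k))) hq hq1
      (by omega) (by rw [hcard]; push_cast; exact_mod_cast hqd) hP (flatSite_injective d k g) _ hN
    have hsub : T g ⊆ Aᶜ := by
      rintro ω ⟨F, h1, h2, h3⟩ hω
      obtain ⟨w, hw, hcl⟩ := hAw ω hω
      have hcount : g ≤ (List.ofFn w).count none := by convert (Finset.mem_filter.1 hw).2
      have hflat : flatPoint d k 0 = 0 := by funext j; simp [flatPoint]
      have := lt_of_closed_path (k := k) (g := g) h1 (fun x => (h2 x).1)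
        (fun x => by simpa [planeHt_flatPoint] using (h2 (flatPoint d k x)).2) hcl
        (by simpa using hcount)
      rw [hflat] at this
      simp at this
      omega
    refine (measure_mono hsub).trans ?_
    rw [← ofReal_measureReal, probReal_compl_eq_one_sub hAm]
    exact ENNReal.ofReal_le_ofReal (by linarith)
  rw [hLIP, hTmono.measure_iUnion]
  refine ((iSup_le hbound).trans_lt ?_).ne
  rw [ENNReal.ofReal_lt_one]
  linarith

theorem sum_stepWeight_le {d k : ℕ} {α q θ : ℝ} (hα : 0 ≤ α) (hθ : 1 ≤ θ) :
    ∑ s, stepWeight α q θ (etaK d k) s ≤ q * θ + 2 * d / θ + 2 * k * θ ^ (α - 1) := by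
  have hθ0 : 0 < θ := by linarith
  have hstep : ∀ (i : Fin d) (b : Bool), stepWeight α q θ (etaK d k) (some (i, b)) ≤
      θ⁻¹ + if (i : ℕ) < k then θ ^ (α - 1) else 0 := by
    intro i b
    simp only [stepWeight, etaK]
    split_ifs with h1 h2
    · refine le_add_of_nonneg_of_le (by positivity) (Real.rpow_le_rpow_of_exponent_le hθ ?_)
      push_cast; linarith
    · refine le_add_of_nonneg_of_le (by positivity) (Real.rpow_le_rpow_of_exponent_le hθ ?_)
      push_cast; linarith
    · simp [Real.rpow_neg_one]
    · simp [Real.rpow_neg_one]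
  have hcount : ∑ i : Fin d, (if (i : ℕ) < k then θ ^ (α - 1) else 0) ≤ k * θ ^ (α - 1) := by
    rw [← Finset.sum_filter, Finset.sum_const, nsmul_eq_mul]
    refine mul_le_mul_of_nonneg_right ?_ (by positivity)
    have : (Finset.univ.filter fun i : Fin d => (i : ℕ) < k).card ≤ (Finset.range k).card :=
      Finset.card_le_card_of_injOn (fun i => (i : ℕ)) (fun i hi => by simpa using hi)
        fun i _ j _ h => Fin.ext h
    exact_mod_cast this.trans_eq (Finset.card_range k)
  rw [Fintype.sum_option, Fintype.sum_prod_type]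
  have := Finset.sum_le_sum fun i (_ : i ∈ (Finset.univ : Finset (Fin d))) =>
    Finset.sum_le_sum fun b (_ : b ∈ (Finset.univ : Finset Bool)) => hstep i b
  refine (add_le_add_right this _).trans ?_
  simp only [Finset.sum_const, Finset.card_univ, Fintype.card_bool, nsmul_eq_mul,
    ← Finset.mul_sum, Finset.sum_add_distrib, Fintype.card_fin, stepWeight]
  have e : 2 * (d : ℝ) / θ = 2 * (d * θ⁻¹) := by ring
  rw [e]
  push_cast
  linarith

/-- If `φ(d) ≤ d` and `φ(d) ∈ o(d^{1−α})` as `d → ∞`, then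
`liminf_{d→∞} d · q_L(α,d,φ(d)) ≥ 1/8`. -/
theorem qL_liminf_little_o_case
    (α : ℝ) (hα : α ∈ Set.Ico (0 : ℝ) 1)
    (φ : ℕ → ℕ) (hφ : ∀ d : ℕ, φ d ≤ d)
    (hlittleo : Tendsto (fun d : ℕ => (φ d : ℝ) / (d : ℝ) ^ (1 - α)) atTop (nhds 0))
    (P : (n : ℕ) → ℝ → Measure (Config n))
    (hP : ∀ n : ℕ, ∀ p ∈ Set.Icc (0 : ℝ) 1, IsBernoulli p (P n p))
    (pc : ℕ → ℝ) (hpc : ∀ d : ℕ, 1 ≤ d → IsCriticalProb (P d) α (etaK d (φ d)) (pc d)) :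
    (1 : ℝ) / 8 ≤ atTop.liminf fun d : ℕ => (d : ℝ) * (1 - pc d) := by
  obtain ⟨hα0, hα1⟩ := hα
  have hbdd : IsBoundedUnder (· ≤ ·) atTop fun d : ℕ => (d : ℝ) * (1 - pc d) := by
    refine ⟨200, eventually_map.2 ?_⟩
    filter_upwards [hlittleo.eventually (gt_mem_nhds (by norm_num : (0 : ℝ) < 1 / 2)),
      eventually_ge_atTop 200] with d hd hd200
    have hdr : (200 : ℝ) ≤ d := by exact_mod_cast hd200
    have hd0 : (0 : ℝ) < d := by linarith
    have hpow : (d : ℝ) ^ (1 - α) ≤ d := by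
      simpa using Real.rpow_le_rpow_of_exponent_le (by linarith : (1 : ℝ) ≤ d)
        (by linarith : 1 - α ≤ 1)
    have hk : (φ d : ℝ) ≤ d / 2 := by
      rw [div_lt_iff₀ (by positivity)] at hd
      linarith
    have hk' : 2 * φ d ≤ d := by
      have : (2 * φ d : ℝ) ≤ d := by linarith
      exact_mod_cast this
    set q : ℝ := 200 / d with hq
    have hq0 : 0 < q := by positivity
    have hq1 : q ≤ 1 := (div_le_one hd0).2 hdr
    have hqd : 100 ≤ q * ((d - φ d : ℕ) + 1) := by
      rw [Nat.cast_sub (hφ d), hq, div_mul_eq_mul_div, le_div_iff₀ hd0]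
      linarith
    have hne := measure_LIP_ne_one (α := α) hq0 hq1 (by omega) hqd
      (hP d (1 - q) ⟨by linarith, by linarith⟩)
    have hle : 1 - q ≤ pc d := by
      by_contra! hlt
      exact hne ((hpc d (by omega)).2.2 _ hlt (by linarith))
    have : (d : ℝ) * (1 - pc d) ≤ d * q := mul_le_mul_of_nonneg_left (by linarith) hd0.le
    rwa [hq, mul_div_cancel₀ _ hd0.ne'] at this
  refine le_of_forall_lt_imp_le_of_dense fun c hc => ?_
  have hc0 : max c 0 < 1 / 8 := max_lt hc (by norm_num)
  refine le_liminf_of_le hbdd.isCoboundedUnder_ge ?_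
  filter_upwards [hlittleo.eventually (gt_mem_nhds
    (by linarith : (0 : ℝ) < (1 / 8 - max c 0) / 2)), eventually_ge_atTop 1] with d hd hd1
  have hdr : (1 : ℝ) ≤ d := by exact_mod_cast hd1
  have hd0 : (0 : ℝ) < d := by linarith
  set q : ℝ := max c 0 / d with hq
  have hq0 : 0 ≤ q := div_nonneg (le_max_right _ _) hd0.le
  have hq1 : q ≤ 1 := (div_le_one hd0).2 (by linarith)
  have hdq : d * q = max c 0 := mul_div_cancel₀ _ hd0.ne'
  have hsum : ∑ s, stepWeight α q (4 * d) (etaK d (φ d)) s < 1 := by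
    refine (sum_stepWeight_le hα0 (by linarith)).trans_lt ?_
    have hpow : 2 * (φ d : ℝ) * (4 * d : ℝ) ^ (α - 1) ≤ 2 * (φ d / (d : ℝ) ^ (1 - α)) := by
      rw [mul_assoc, div_eq_mul_inv, ← Real.rpow_neg hd0.le, neg_sub]
      have := Real.rpow_le_rpow_of_nonpos hd0 (by linarith : (d : ℝ) ≤ 4 * d)
        (by linarith : α - 1 ≤ 0)
      gcongr
    have hdiag : 2 * (d : ℝ) / (4 * d) = 1 / 2 := by field_simp; norm_num
    rw [hdiag]
    linarith
  have hne := measure_LIP_ne_zero hq0 (by linarith) (hP d (1 - q) ⟨by linarith, by linarith⟩) hsum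
  have hle : pc d ≤ 1 - q := by
    by_contra! hlt
    exact hne ((hpc d hd1).2.1 _ (by linarith) hlt)
  calc c ≤ d * q := hdq ▸ le_max_left c 0
    _ ≤ d * (1 - pc d) := mul_le_mul_of_nonneg_left (by linarith) hd0.le
end

section
/- For each d ≥ 1 and each k = 1,…,d there exists a constant C(k,d) > 0 such that for all α ∈ [0,1) one has q_L(α,d,k) ≥ C(k,d)·(1−α)^k. -/
open MeasureTheory Filter ENNReal

/-- Signed height of `(x, h)` above the real hyperplane of slope `α` in direction `η`. -/
noncomputable def tilt (α : ℝ) {d : ℕ} (η x : Fin d → ℤ) (h : ℤ) : ℝ :=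
  h - α * ∑ i, (η i : ℝ) * (x i : ℝ)

/-- The site `(x, h)` can be reached from below the plane by a path with `n` upward steps, each
onto a closed site, and with free moves inside the cone `{(u, -m) : ‖u‖₁ ≤ m}` in between. -/
def Reach (α : ℝ) {d : ℕ} (η : Fin d → ℤ) (ω : Config d) : ℕ → (Fin d → ℤ) → ℤ → Prop
  | 0, x, h => tilt α η x h ≤ 0
  | n + 1, x, h => ∃ (u : Fin d → ℤ) (j : ℕ),
      ω (Fin.snoc (x - u) (h + ∑ i, |u i| + j)) = false ∧
        Reach α η ω n (x - u) (h + ∑ i, |u i| + j - 1)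

/-- As `Reach`, but the closed sites used are distinct and avoid the finite set `s`. -/
def ReachAvoiding (α : ℝ) {d : ℕ} (η : Fin d → ℤ) (ω : Config d) :
    ℕ → Finset (Site d) → (Fin d → ℤ) → ℤ → Prop
  | 0, _, x, h => tilt α η x h ≤ 0
  | n + 1, s, x, h => ∃ (u : Fin d → ℤ) (j : ℕ),
      (Fin.snoc (x - u) (h + ∑ i, |u i| + j) : Site d) ∉ s ∧
        ω (Fin.snoc (x - u) (h + ∑ i, |u i| + j)) = false ∧
          ReachAvoiding α η ω n (insert (Fin.snoc (x - u) (h + ∑ i, |u i| + j)) s)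
            (x - u) (h + ∑ i, |u i| + j - 1)

/-- A path with the minimal number of upward steps uses distinct closed sites. -/
theorem Reach.reachAvoiding {α : ℝ} {d : ℕ} {η : Fin d → ℤ} {ω : Config d} {n : ℕ}
    {s : Finset (Site d)} {x : Fin d → ℤ} {h : ℤ} (hr : Reach α η ω n x h)
    (hmin : ∀ m < n, ¬ Reach α η ω m x h)
    (hs : ∀ y b, (Fin.snoc y b : Site d) ∈ s → ∀ m < n,
      ¬ (ω (Fin.snoc y b) = false ∧ Reach α η ω m y (b - 1))) :
    ReachAvoiding α η ω n s x h := by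
  induction n generalizing s x h with
  | zero => exact hr
  | succ n ih =>
    obtain ⟨u, j, hc, hr⟩ := hr
    have hmin' : ∀ m < n, ¬ Reach α η ω m (x - u) (h + ∑ i, |u i| + j - 1) :=
      fun m hm hm' => hmin (m + 1) (by omega) ⟨u, j, hc, hm'⟩
    refine ⟨u, j, fun hmem => hs _ _ hmem n (by omega) ⟨hc, hr⟩, hc, ih hr hmin' ?_⟩
    intro y b hy m hm hyb
    rcases Finset.mem_insert.1 hy with hy | hy
    · obtain ⟨rfl, rfl⟩ := Fin.snoc_injective2 hy
      exact hmin' m hm hyb.2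
    · exact hs y b hy m (by omega) hyb

theorem exists_reachAvoiding_of_reach {α : ℝ} {d : ℕ} {η : Fin d → ℤ} {ω : Config d} {n : ℕ}
    {x : Fin d → ℤ} {h : ℤ} (hr : Reach α η ω n x h) :
    ∃ m, ReachAvoiding α η ω m ∅ x h := by
  classical
  have hex : ∃ n, Reach α η ω n x h := ⟨n, hr⟩
  exact ⟨Nat.find hex, (Nat.find_spec hex).reachAvoiding (fun m hm => Nat.find_min hex hm)
    (by simp)⟩

/-- The reachable set is closed under moves inside the downward cone. -/
theorem Reach.cone {α : ℝ} {d : ℕ} {η : Fin d → ℤ} (hα0 : 0 ≤ α) (hα1 : α ≤ 1)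
    (hη : ∀ i, |η i| ≤ 1) {ω : Config d} {n : ℕ} {x y : Fin d → ℤ} {h b : ℤ}
    (hr : Reach α η ω n x h) (hb : ∑ i, |x i - y i| ≤ h - b) : Reach α η ω n y b := by
  cases n with
  | zero =>
    have hsum : ∑ i, η i * x i - ∑ i, η i * y i ≤ h - b := by
      rw [← Finset.sum_sub_distrib]
      refine (Finset.sum_le_sum fun i _ => ?_).trans hb
      rw [← mul_sub]
      refine (le_abs_self _).trans ?_
      rw [abs_mul]
      exact mul_le_of_le_one_left (abs_nonneg _) (hη i)
    have hnn : 0 ≤ h - b := (Finset.sum_nonneg fun i _ => abs_nonneg _).trans hb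
    have hsum' : (∑ i, (η i : ℝ) * x i) - ∑ i, (η i : ℝ) * y i ≤ h - b := by
      exact_mod_cast hsum
    have hnn' : (0 : ℝ) ≤ h - b := by exact_mod_cast hnn
    simp only [Reach, tilt] at hr ⊢
    nlinarith
  | succ n =>
    obtain ⟨u, j, hc, hr⟩ := hr
    have htri : ∑ i, |u i - (x i - y i)| ≤ ∑ i, |u i| + ∑ i, |x i - y i| := by
      rw [← Finset.sum_add_distrib]
      exact Finset.sum_le_sum fun i _ => abs_sub _ _
    obtain ⟨l, hl⟩ := Int.eq_ofNat_of_zero_le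
      (a := h + ∑ i, |u i| + j - b - ∑ i, |u i - (x i - y i)|) (by omega)
    have hx : y - (u - (x - y)) = x - u := by abel
    have hh : b + ∑ i, |(u - (x - y)) i| + l = h + ∑ i, |u i| + j := by
      simp only [Pi.sub_apply]
      omega
    refine ⟨u - (x - y), l, ?_, ?_⟩
    · rw [hx, hh]; exact hc
    · rw [hx, hh]; exact hr

/-- If no column is entirely reachable, the lower boundary of the unreachable set is an open
Lipschitz surface above the plane. -/
theorem mem_LIP_of_forall_exists_not_reach {α : ℝ} {d : ℕ} {η : Fin d → ℤ} (hα0 : 0 ≤ α)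
    (hα1 : α ≤ 1) (hη : ∀ i, |η i| ≤ 1) {ω : Config d}
    (hω : ∀ x, ∃ h : ℕ, ∀ n, ¬ Reach α η ω n x h) : ω ∈ LIP α η := by
  have hplane : ∀ x h, h ≤ planeHt α η x ↔ Reach α η ω 0 x h := by
    intro x h
    simp only [planeHt, Reach, tilt, Int.le_floor, sub_nonpos]
  have hF : ∀ x, ∃ h : ℤ, (∃ n, Reach α η ω n x (h - 1)) ∧ ∀ n, ¬ Reach α η ω n x h := by
    intro x
    obtain ⟨a, ha⟩ := hω x
    obtain ⟨b, ⟨n, hb⟩, hmax⟩ := Int.exists_greatest_of_bdd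
      (P := fun h => ∃ n, Reach α η ω n x h)
      ⟨a, fun z ⟨n, hz⟩ => by
        by_contra! hlt
        exact ha n (hz.cone hα0 hα1 hη (by simp; omega))⟩
      ⟨_, 0, (hplane x _).1 le_rfl⟩
    refine ⟨b + 1, ⟨n, by simpa using hb⟩, fun m hm => ?_⟩
    have := hmax _ ⟨m, hm⟩
    omega
  choose F hF1 hF2 using hF
  have hstep : ∀ x y, (∑ i, |x i - y i|) = 1 → F x - F y ≤ 1 := by
    intro x y hxy
    by_contra! hlt
    obtain ⟨n, hn⟩ := hF1 x
    exact hF2 y n (hn.cone hα0 hα1 hη (by omega))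
  refine ⟨F, fun x y hxy => abs_le.2 ⟨?_, hstep x y hxy⟩, fun x => ⟨?_, ?_⟩⟩
  · have := hstep y x (by simpa only [abs_sub_comm] using hxy)
    omega
  · by_contra hc
    obtain ⟨n, hn⟩ := hF1 x
    exact hF2 x (n + 1) ⟨0, 0, by simpa using hc, by simpa using hn⟩
  · by_contra! hle
    exact hF2 x 0 ((hplane x _).1 hle)

/-- The exponential weight of the free cone moves. -/
noncomputable def coneWeight (α : ℝ) {d : ℕ} (η : Fin d → ℤ) : ℝ≥0∞ :=
  ∑' (u : Fin d → ℤ) (j : ℕ),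
    ENNReal.ofReal (Real.exp (-(∑ i, |(u i : ℝ)| + j + α * ∑ i, (η i : ℝ) * (u i : ℝ))))

theorem measure_reachAvoiding_le {α : ℝ} {d : ℕ} {η : Fin d → ℤ} {μ : Measure (Config d)}
    {q : ℝ≥0∞} (hμ : ∀ s : Finset (Site d), μ {ω | ∀ x ∈ s, ω x = false} ≤ q ^ s.card)
    (n : ℕ) (s : Finset (Site d)) (x : Fin d → ℤ) (h : ℤ) :
    μ {ω | (∀ y ∈ s, ω y = false) ∧ ReachAvoiding α η ω n s x h} ≤
      q ^ s.card * (q * ENNReal.ofReal (Real.exp 1) * coneWeight α η) ^ n *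
        ENNReal.ofReal (Real.exp (-tilt α η x h)) := by
  induction n generalizing s x h with
  | zero =>
    by_cases ht : tilt α η x h ≤ 0
    · have h1 : 1 ≤ ENNReal.ofReal (Real.exp (-tilt α η x h)) := by
        rw [ENNReal.one_le_ofReal]
        exact Real.one_le_exp (by linarith)
      simp only [ReachAvoiding, ht, and_true, pow_zero, mul_one]
      exact (hμ s).trans (le_mul_of_one_le_right' h1)
    · simp [ReachAvoiding, ht]
  | succ n ih =>
    set w : (Fin d → ℤ) → ℕ → ℝ≥0∞ := fun u j =>
      ENNReal.ofReal (Real.exp (-(∑ i, |(u i : ℝ)| + j + α * ∑ i, (η i : ℝ) * (u i : ℝ))))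
      with hw
    set A := q ^ s.card * (q * ENNReal.ofReal (Real.exp 1)) *
      (q * ENNReal.ofReal (Real.exp 1) * coneWeight α η) ^ n *
        ENNReal.ofReal (Real.exp (-tilt α η x h)) with hA
    have hstep : ∀ (u : Fin d → ℤ) (j : ℕ),
        μ {ω | (∀ y ∈ s, ω y = false) ∧
          (Fin.snoc (x - u) (h + ∑ i, |u i| + j) : Site d) ∉ s ∧
          ω (Fin.snoc (x - u) (h + ∑ i, |u i| + j)) = false ∧
          ReachAvoiding α η ω n (insert (Fin.snoc (x - u) (h + ∑ i, |u i| + j)) s)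
            (x - u) (h + ∑ i, |u i| + j - 1)} ≤ A * w u j := by
      intro u j
      by_cases hm : (Fin.snoc (x - u) (h + ∑ i, |u i| + j) : Site d) ∈ s
      · simp [hm]
      · refine (measure_mono ?_).trans ((ih (insert (Fin.snoc (x - u) (h + ∑ i, |u i| + j)) s)
          (x - u) (h + ∑ i, |u i| + j - 1)).trans_eq ?_)
        · rintro ω ⟨h1, -, h2, h3⟩
          refine ⟨fun y hy => ?_, h3⟩
          rcases Finset.mem_insert.1 hy with rfl | hy
          · exact h2
          · exact h1 y hy
        · have hexp : ENNReal.ofReal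
              (Real.exp (-tilt α η (x - u) (h + ∑ i, |u i| + j - 1))) =
              ENNReal.ofReal (Real.exp 1) *
                ENNReal.ofReal (Real.exp (-tilt α η x h)) * w u j := by
            rw [hw, ← ENNReal.ofReal_mul (Real.exp_nonneg _), ← Real.exp_add,
              ← ENNReal.ofReal_mul (Real.exp_nonneg _), ← Real.exp_add]
            congr 2
            simp only [tilt, Pi.sub_apply]
            push_cast
            simp only [mul_sub, Finset.sum_sub_distrib]
            ring
          rw [Finset.card_insert_of_notMem hm, hexp, hA, pow_succ]
          ring
    calc _ ≤ ∑' (u : Fin d → ℤ) (j : ℕ), A * w u j := by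
          refine le_trans (measure_mono ?_) ((measure_iUnion_le _).trans
            (ENNReal.tsum_le_tsum fun u => (measure_iUnion_le _).trans
              (ENNReal.tsum_le_tsum fun j => hstep u j)))
          rintro ω ⟨h1, u, j, h2⟩
          exact Set.mem_iUnion.2 ⟨u, Set.mem_iUnion.2 ⟨j, h1, h2⟩⟩
      _ = A * coneWeight α η := by simp_rw [ENNReal.tsum_mul_left]; rfl
      _ = _ := by rw [hA, pow_succ]; ring

theorem measure_exists_reach_le {α : ℝ} {d : ℕ} {η : Fin d → ℤ} {μ : Measure (Config d)}
    {q : ℝ≥0∞} (hμ : ∀ s : Finset (Site d), μ {ω | ∀ x ∈ s, ω x = false} ≤ q ^ s.card)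
    (hq : q * ENNReal.ofReal (Real.exp 1) * coneWeight α η ≤ 2⁻¹)
    (x : Fin d → ℤ) (h : ℤ) :
    μ {ω | ∃ n, Reach α η ω n x h} ≤ 2 * ENNReal.ofReal (Real.exp (-tilt α η x h)) := by
  calc _ ≤ μ (⋃ n, {ω | (∀ y ∈ (∅ : Finset (Site d)), ω y = false) ∧
            ReachAvoiding α η ω n ∅ x h}) := by
        refine measure_mono ?_
        rintro ω ⟨n, hn⟩
        obtain ⟨m, hm⟩ := exists_reachAvoiding_of_reach hn
        exact Set.mem_iUnion.2 ⟨m, by simp, hm⟩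
    _ ≤ ∑' n : ℕ, 2⁻¹ ^ n * ENNReal.ofReal (Real.exp (-tilt α η x h)) := by
        refine (measure_iUnion_le _).trans (ENNReal.tsum_le_tsum fun n => ?_)
        refine (measure_reachAvoiding_le hμ n ∅ x h).trans ?_
        rw [Finset.card_empty, pow_zero, one_mul]
        gcongr
    _ = _ := by
        rw [ENNReal.tsum_mul_right, ENNReal.tsum_geometric, ENNReal.one_sub_inv_two, inv_inv]

theorem measure_LIP_ne_zero_s10 {α : ℝ} {d : ℕ} {η : Fin d → ℤ} (hα0 : 0 ≤ α)
    (hα1 : α ≤ 1) (hη : ∀ i, |η i| ≤ 1) {μ : Measure (Config d)} [IsProbabilityMeasure μ]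
    {q : ℝ≥0∞} (hμ : ∀ s : Finset (Site d), μ {ω | ∀ x ∈ s, ω x = false} ≤ q ^ s.card)
    (hq : q * ENNReal.ofReal (Real.exp 1) * coneWeight α η ≤ 2⁻¹) : μ (LIP α η) ≠ 0 := by
  have hae : ∀ᵐ ω ∂μ, ∀ x, ∃ h : ℕ, ∀ n, ¬ Reach α η ω n x h := by
    refine ae_all_iff.2 fun x => ?_
    have hlim : Tendsto (fun h : ℕ => 2 * ENNReal.ofReal (Real.exp (-tilt α η x (h : ℤ))))
        atTop (nhds 0) := by
      have hexp : Tendsto (fun h : ℕ => Real.exp (-tilt α η x (h : ℤ))) atTop (nhds 0) := by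
        refine Real.tendsto_exp_neg_atTop_nhds_zero.comp ?_
        simp only [tilt, Int.cast_natCast, sub_eq_add_neg]
        exact tendsto_atTop_add_const_right _ _ tendsto_natCast_atTop_atTop
      simpa using ENNReal.Tendsto.const_mul (ENNReal.tendsto_ofReal hexp)
        (Or.inr ENNReal.ofNat_ne_top)
    refine le_antisymm (ge_of_tendsto' hlim fun h => ?_) bot_le
    refine (measure_mono ?_).trans (measure_exists_reach_le hμ hq x h)
    intro ω hω
    simp only [Set.mem_compl_iff, Set.mem_ofPred_eq, not_exists, not_forall, not_not] at hω
    exact hω h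
  have hlip : ∀ᵐ ω ∂μ, ω ∈ LIP α η :=
    hae.mono fun ω hω => mem_LIP_of_forall_exists_not_reach hα0 hα1 hη hω
  intro hzero
  have huniv := measure_congr (eventuallyEq_univ.2 hlip)
  rw [measure_univ] at huniv
  exact one_ne_zero (huniv.symm.trans hzero)

theorem ENNReal.tsum_pi_prod {ι : Type*} {n : ℕ} (g : Fin n → ι → ℝ≥0∞) :
    ∑' x : Fin n → ι, ∏ i, g i (x i) = ∏ i, ∑' a, g i a := by
  induction n with
  | zero => simp
  | succ n ih =>
    rw [← (Fin.consEquiv fun _ => ι).tsum_eq, ENNReal.tsum_prod', Fin.prod_univ_succ,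
      ← ih fun i => g i.succ, ← ENNReal.tsum_mul_right]
    refine tsum_congr fun a => ?_
    rw [← ENNReal.tsum_mul_left]
    simp [Fin.consEquiv, Fin.prod_univ_succ]

theorem tsum_nat_exp_neg_mul_le {u : ℝ} (hu0 : 0 < u) (hu1 : u ≤ 1) :
    ∑' n : ℕ, ENNReal.ofReal (Real.exp (-(u * n))) ≤ ENNReal.ofReal (2 / u) := by
  have hlt : Real.exp (-u) < 1 := Real.exp_lt_one_iff.2 (by linarith)
  have hterm : ∀ n : ℕ, Real.exp (-(u * n)) = Real.exp (-u) ^ n := by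
    intro n
    rw [← Real.exp_nat_mul]
    ring_nf
  simp_rw [hterm]
  rw [← ENNReal.ofReal_tsum_of_nonneg (fun n => by positivity)
    (summable_geometric_of_lt_one (Real.exp_nonneg _) hlt),
    tsum_geometric_of_lt_one (Real.exp_nonneg _) hlt]
  refine ENNReal.ofReal_le_ofReal ?_
  have hexp : Real.exp (-u) ≤ 1 - u / 2 := by
    rw [Real.exp_neg, inv_le_comm₀ (Real.exp_pos _) (by linarith)]
    refine le_trans ?_ (Real.add_one_le_exp u)
    rw [inv_le_iff_one_le_mul₀ (by linarith)]
    nlinarith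
  rw [← inv_div u 2]
  exact inv_anti₀ (by positivity) (by linarith)

theorem tsum_int_exp_neg_le {β : ℝ} (h0 : 0 ≤ β) (h1 : β < 1) :
    ∑' a : ℤ, ENNReal.ofReal (Real.exp (-(|(a : ℝ)| + β * a))) ≤
      ENNReal.ofReal (4 / (1 - β)) := by
  have hb : 0 < 1 - β := by linarith
  have hnat := tsum_nat_exp_neg_mul_le hb (by linarith)
  rw [tsum_of_nat_of_neg_add_one ENNReal.summable ENNReal.summable]
  calc _ ≤ ∑' n : ℕ, ENNReal.ofReal (Real.exp (-((1 - β) * n))) +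
          ∑' n : ℕ, ENNReal.ofReal (Real.exp (-((1 - β) * n))) := by
        refine add_le_add (ENNReal.tsum_le_tsum fun n => ?_) (ENNReal.tsum_le_tsum fun n => ?_)
        all_goals
          refine ENNReal.ofReal_le_ofReal (Real.exp_le_exp.2 ?_)
          have hn : (0 : ℝ) ≤ n := n.cast_nonneg
          push_cast
        · rw [abs_of_nonneg hn]
          nlinarith
        · rw [abs_of_nonpos (by linarith)]
          nlinarith
    _ ≤ ENNReal.ofReal (2 / (1 - β)) + ENNReal.ofReal (2 / (1 - β)) := add_le_add hnat hnat
    _ = _ := by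
        rw [← ENNReal.ofReal_add (by positivity) (by positivity)]
        congr 1
        ring

theorem coneWeight_etaK_le {α : ℝ} (hα0 : 0 ≤ α) (hα1 : α < 1) {d k : ℕ} (hkd : k ≤ d) :
    coneWeight α (etaK d k) ≤ ENNReal.ofReal (2 * 4 ^ d / (1 - α) ^ k) := by
  have hb : 0 < 1 - α := by linarith
  have hterm : ∀ (u : Fin d → ℤ) (j : ℕ), ENNReal.ofReal (Real.exp
      (-(∑ i, |(u i : ℝ)| + j + α * ∑ i, (etaK d k i : ℝ) * (u i : ℝ)))) =
      (∏ i, ENNReal.ofReal (Real.exp (-(|(u i : ℝ)| + α * etaK d k i * u i)))) *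
        ENNReal.ofReal (Real.exp (-(1 * j))) := by
    intro u j
    rw [← ENNReal.ofReal_prod_of_nonneg fun _ _ => Real.exp_nonneg _, ← Real.exp_sum,
      ← ENNReal.ofReal_mul (Real.exp_nonneg _), ← Real.exp_add]
    congr 2
    simp only [Finset.sum_neg_distrib, Finset.sum_add_distrib, Finset.mul_sum, mul_assoc]
    ring
  have hcoord : ∀ i : Fin d, ∑' a : ℤ,
      ENNReal.ofReal (Real.exp (-(|(a : ℝ)| + α * etaK d k i * a))) ≤
        ENNReal.ofReal (4 / (if (i : ℕ) < k then 1 - α else 1)) := by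
    intro i
    by_cases hi : (i : ℕ) < k
    · simpa [etaK, hi] using tsum_int_exp_neg_le hα0 hα1
    · simpa [etaK, hi] using tsum_int_exp_neg_le le_rfl zero_lt_one
  have hcard : (Finset.univ.filter fun i : Fin d => (i : ℕ) < k).card = k := by
    simp [Fin.card_filter_val_lt, hkd]
  simp_rw [coneWeight, hterm, ENNReal.tsum_mul_left, ENNReal.tsum_mul_right]
  rw [ENNReal.tsum_pi_prod
    fun i (a : ℤ) => ENNReal.ofReal (Real.exp (-(|(a : ℝ)| + α * etaK d k i * a)))]
  refine (mul_le_mul' (Finset.prod_le_prod' fun i _ => hcoord i)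
    (tsum_nat_exp_neg_mul_le one_pos le_rfl)).trans_eq ?_
  have hnn : ∀ i ∈ (Finset.univ : Finset (Fin d)),
      0 ≤ 4 / (if (i : ℕ) < k then 1 - α else 1) := by
    intro i _
    split_ifs <;> positivity
  rw [← ENNReal.ofReal_prod_of_nonneg hnn, ← ENNReal.ofReal_mul (Finset.prod_nonneg hnn)]
  congr 1
  rw [Finset.prod_div_distrib, Finset.prod_ite]
  simp [hcard]
  ring

/-- For each `d ≥ 1` and each `k = 1,…,d` there is a constant
`C(k,d) > 0` such that `q_L(α,d,k) ≥ C(k,d)·(1−α)^k` for all `α ∈ [0,1)`. -/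
theorem qL_lower_bound_in_alpha
    {d : ℕ} (hd : 1 ≤ d) (k : ℕ) (hk1 : 1 ≤ k) (hkd : k ≤ d)
    (P : ℝ → Measure (Config d)) (hP : ∀ p ∈ Set.Icc (0 : ℝ) 1, IsBernoulli p (P p))
    (pc : ℝ → ℝ) (hpc : ∀ α ∈ Set.Ico (0 : ℝ) 1, IsCriticalProb P α (etaK d k) (pc α)) :
    ∃ C : ℝ, 0 < C ∧ ∀ α ∈ Set.Ico (0 : ℝ) 1, C * (1 - α) ^ k ≤ 1 - pc α := by
  refine ⟨1 / (12 * 4 ^ d), by positivity, fun α hα => ?_⟩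
  obtain ⟨hα0, hα1⟩ := hα
  have hb : 0 < 1 - α := by linarith
  set q : ℝ := 1 / (12 * 4 ^ d) * (1 - α) ^ k with hq
  have hq0 : 0 ≤ q := by positivity
  have hq1 : q ≤ 1 := by
    have h4 : (1 : ℝ) ≤ 4 ^ d := one_le_pow₀ (by norm_num)
    exact mul_le_one₀ (by rw [div_le_one (by positivity)]; linarith) (by positivity)
      (pow_le_one₀ hb.le (by linarith))
  have hBer := hP (1 - q) ⟨by linarith, by linarith⟩
  have := hBer.1
  have hcyl : ∀ s : Finset (Site d),
      P (1 - q) {ω | ∀ x ∈ s, ω x = false} ≤ ENNReal.ofReal q ^ s.card := by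
    intro s
    simpa using (hBer.2 s fun _ => false).le
  have hsmall : ENNReal.ofReal q * ENNReal.ofReal (Real.exp 1) * coneWeight α (etaK d k) ≤
      2⁻¹ := by
    calc _ ≤ ENNReal.ofReal q * ENNReal.ofReal (Real.exp 1) *
          ENNReal.ofReal (2 * 4 ^ d / (1 - α) ^ k) := by
          gcongr
          exact coneWeight_etaK_le hα0 hα1 hkd
      _ = ENNReal.ofReal (Real.exp 1 / 6) := by
          rw [← ENNReal.ofReal_mul hq0, ← ENNReal.ofReal_mul (by positivity), hq]
          congr 1
          field_simp
          norm_num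
      _ ≤ ENNReal.ofReal 2⁻¹ :=
          ENNReal.ofReal_le_ofReal (by linarith [Real.exp_one_lt_three])
      _ = 2⁻¹ := by rw [ENNReal.ofReal_inv_of_pos two_pos]; simp
  have hη : ∀ i, |etaK d k i| ≤ 1 := fun i => by
    unfold etaK
    split_ifs <;> simp
  have hpos := measure_LIP_ne_zero_s10 hα0 hα1.le hη hcyl hsmall
  by_contra! hlt
  exact hpos ((hpc α ⟨hα0, hα1⟩).2.1 (1 - q) (by linarith) (by linarith))
end
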